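/- arXiv:2302.03363 — 3 statements merged into one kernel-verified Lean document; each statement's English description precedes it below -/
import Mathlib

section
/- Let α, β be real numbers with α > -1/2 and α + β > −1, let γ = −1/2, and let θ > 0. Define G(T) = e^{−2θT} ∫₀ᵀ s^{2α} (∫ₛᵀ e^{θt} t^β (t−s)^{−1/2} dt)² ds for T > 0. Then lim_{T→+∞} G(T) / (T^{2α+2β} log T) = 1/θ². -/
open MeasureTheory Filter intervalIntegral
open Set
open scoped Topology

/-!
Reflecting `s = T - x` and rescaling the inner integral write `G(T) / T^{2α+2β}` as
`∫₀ᵀ F(x/T, x) dx/x`. Here `F(z, x) → 1/θ²` as `z → 0` and `x → ∞`, because the probability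
density `θ x e^{-θxv}` concentrates at `v = 0`, and `|F(z, x)| ≤ C min(1, x) (1 - z)^a` for some
`a > -1`. The measure `dx/x` is the source of the logarithm: with `x = T^r` the integral becomes
`log T · ∫_{-∞}^1 F(T^{r-1}, T^r) dr`, whose integrand tends to `1/θ²` for `0 < r < 1` and to `0`
for `r < 0`, and for `T ≥ e` is dominated by `C e^r (1 - e^{r-1})^a`.
-/

section LogarithmicScale

variable {T : ℝ}

theorem image_const_rpow_Iio_one (hT : 1 < T) : (fun r : ℝ => T ^ r) '' Iio 1 = Ioo 0 T := by
  have hT0 : 0 < T := one_pos.trans hT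
  ext x
  constructor
  · rintro ⟨r, hr, rfl⟩
    exact ⟨Real.rpow_pos_of_pos hT0 r, Real.rpow_lt_self_of_one_lt hT hr⟩
  · rintro ⟨hx, hxT⟩
    exact ⟨Real.logb T x, (Real.logb_lt_iff_lt_rpow hT hx).2 (by rwa [Real.rpow_one]),
      Real.rpow_logb hT0 hT.ne' hx⟩

theorem hasDerivWithinAt_const_rpow (hT : 0 < T) (s : Set ℝ) (r : ℝ) :
    HasDerivWithinAt (fun r : ℝ => T ^ r) (T ^ r * Real.log T) s r :=
  (Real.hasStrictDerivAt_const_rpow hT r).hasDerivAt.hasDerivWithinAt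

theorem injective_const_rpow (hT : 1 < T) : Function.Injective fun r : ℝ => T ^ r :=
  (Real.strictMono_rpow_of_base_gt_one hT).injective

theorem abs_const_rpow_mul_log_smul_div (hT : 1 < T) (f : ℝ → ℝ) (r : ℝ) :
    |T ^ r * Real.log T| • (f (T ^ r) / T ^ r) = Real.log T * f (T ^ r) := by
  have hTr : 0 < T ^ r := Real.rpow_pos_of_pos (one_pos.trans hT) r
  rw [abs_of_pos (mul_pos hTr (Real.log_pos hT)), smul_eq_mul]
  field_simp

theorem integral_div_eq_log_mul_integral_const_rpow (hT : 1 < T) (f : ℝ → ℝ) :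
    ∫ x in (0 : ℝ)..T, f x / x = Real.log T * ∫ r in Iio (1 : ℝ), f (T ^ r) := by
  have hT0 : 0 < T := one_pos.trans hT
  rw [integral_of_le hT0.le, integral_Ioc_eq_integral_Ioo, ← image_const_rpow_Iio_one hT,
    integral_image_eq_integral_abs_deriv_smul measurableSet_Iio
      (fun r _ => hasDerivWithinAt_const_rpow hT0 _ r) (injective_const_rpow hT).injOn]
  simp only [abs_const_rpow_mul_log_smul_div hT, MeasureTheory.integral_const_mul]

theorem integrableOn_comp_const_rpow_iff (hT : 1 < T) (f : ℝ → ℝ) :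
    IntegrableOn (fun r : ℝ => f (T ^ r)) (Iio 1) ↔
      IntegrableOn (fun x : ℝ => f x / x) (Ioo 0 T) := by
  rw [← image_const_rpow_Iio_one hT,
    integrableOn_image_iff_integrableOn_abs_deriv_smul measurableSet_Iio
      (fun r _ => hasDerivWithinAt_const_rpow (one_pos.trans hT) _ r)
      (injective_const_rpow hT).injOn]
  simp only [abs_const_rpow_mul_log_smul_div hT]
  exact (integrable_const_mul_iff (Real.log_pos hT).ne'.isUnit _).symm

end LogarithmicScale

theorem intervalIntegrable_one_sub_rpow {a : ℝ} (ha : -1 < a) :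
    IntervalIntegrable (fun v : ℝ => (1 - v) ^ a) volume 0 1 := by
  have h := (intervalIntegrable_rpow' (a := 0) (b := 1) ha).comp_sub_left 1
  simpa using h.symm

theorem integrableOn_exp_mul_one_sub_exp_rpow {a : ℝ} (ha : -1 < a) :
    IntegrableOn (fun r : ℝ => Real.exp r * (1 - Real.exp (r - 1)) ^ a) (Iio 1) := by
  have he : 1 < Real.exp 1 := Real.one_lt_exp_iff.2 one_pos
  have hint : IntervalIntegrable (fun x : ℝ => (1 - x / Real.exp 1) ^ a) volume 0 (Real.exp 1) := by
    simpa [div_eq_inv_mul] using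
      (intervalIntegrable_one_sub_rpow ha).comp_mul_left (c := (Real.exp 1)⁻¹)
  have h := (integrableOn_comp_const_rpow_iff he fun x => x * (1 - x / Real.exp 1) ^ a).2 <|
    ((intervalIntegrable_iff_integrableOn_Ioo_of_le (Real.exp_pos 1).le).1 hint).congr_fun
      (fun x hx => (mul_div_cancel_left₀ _ hx.1.ne').symm) measurableSet_Ioo
  simpa only [Real.exp_one_rpow, ← Real.exp_sub] using h

section LogarithmicAverage

variable {F : ℝ → ℝ → ℝ} {a C ℓ : ℝ}

theorem abs_comp_const_rpow_le (ha : a ≤ 0) (hC : 0 ≤ C)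
    (hF : ∀ z ∈ Ioo (0 : ℝ) 1, ∀ x, 0 < x → |F z x| ≤ C * min 1 x * (1 - z) ^ a)
    {T r : ℝ} (hT : Real.exp 1 ≤ T) (hr : r < 1) :
    |F (T ^ r / T) (T ^ r)| ≤ C * (Real.exp r * (1 - Real.exp (r - 1)) ^ a) := by
  have hT0 : 0 < T := (Real.exp_pos 1).trans_le hT
  have hmin : min 1 (T ^ r) ≤ Real.exp r := by
    rcases le_total 0 r with h0 | h0
    · exact (min_le_left _ _).trans (Real.one_le_exp h0)
    · rw [← Real.exp_one_rpow r]
      exact (min_le_right _ _).trans (Real.rpow_le_rpow_of_nonpos (Real.exp_pos 1) hT h0)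
  have hz : T ^ r / T ≤ Real.exp (r - 1) := by
    rw [← Real.rpow_sub_one hT0.ne', ← Real.exp_one_rpow (r - 1)]
    exact Real.rpow_le_rpow_of_nonpos (Real.exp_pos 1) hT (by linarith)
  have hexp : Real.exp (r - 1) < 1 := by simpa using hr
  have hpow : (1 - T ^ r / T) ^ a ≤ (1 - Real.exp (r - 1)) ^ a :=
    Real.rpow_le_rpow_of_nonpos (by linarith) (by linarith) ha
  calc |F (T ^ r / T) (T ^ r)| ≤ C * min 1 (T ^ r) * (1 - T ^ r / T) ^ a :=
        hF _ ⟨by positivity, hz.trans_lt hexp⟩ _ (by positivity)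
    _ ≤ C * Real.exp r * (1 - Real.exp (r - 1)) ^ a :=
        mul_le_mul (mul_le_mul_of_nonneg_left hmin hC) hpow
          (Real.rpow_nonneg (by linarith) a) (by positivity)
    _ = C * (Real.exp r * (1 - Real.exp (r - 1)) ^ a) := mul_assoc _ _ _

theorem tendsto_const_rpow_div_self {r : ℝ} (hr : r < 1) :
    Tendsto (fun T : ℝ => T ^ r / T) atTop (𝓝[>] 0) := by
  refine tendsto_nhdsWithin_iff.2 ⟨?_, ?_⟩
  · refine (tendsto_rpow_neg_atTop (y := 1 - r) (by linarith)).congr' ?_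
    filter_upwards [eventually_gt_atTop 0] with T hT
    rw [← Real.rpow_sub_one hT.ne', neg_sub]
  · filter_upwards [eventually_gt_atTop 0] with T hT
    exact div_pos (Real.rpow_pos_of_pos hT r) hT

theorem tendsto_comp_const_rpow (hlim : Tendsto F.uncurry (𝓝[>] 0 ×ˢ atTop) (𝓝 ℓ))
    (hF : ∀ z ∈ Ioo (0 : ℝ) 1, ∀ x, 0 < x → |F z x| ≤ C * min 1 x * (1 - z) ^ a)
    {r : ℝ} (hr1 : r < 1) (hr0 : r ≠ 0) :
    Tendsto (fun T : ℝ => F (T ^ r / T) (T ^ r)) atTop (𝓝 ((Ioi 0).indicator (fun _ => ℓ) r)) := by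
  have hz := tendsto_const_rpow_div_self hr1
  rcases hr0.lt_or_gt with hr | hr
  · rw [indicator_of_notMem (notMem_Ioi.2 hr.le)]
    have hz0 := hz.mono_right nhdsWithin_le_nhds
    have hx : Tendsto (fun T : ℝ => T ^ r) atTop (𝓝 0) := by
      simpa using tendsto_rpow_neg_atTop (neg_pos.2 hr)
    have hbound : Tendsto (fun T : ℝ => C * min 1 (T ^ r) * (1 - T ^ r / T) ^ a) atTop (𝓝 0) := by
      simpa using ((tendsto_const_nhds (x := (1 : ℝ)).min hx).const_mul C).mul
        ((hz0.const_sub 1).rpow_const (p := a) (by simp))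
    refine squeeze_zero_norm' ?_ hbound
    filter_upwards [hz.eventually (Ioo_mem_nhdsGT one_pos), eventually_gt_atTop 0] with T hzT hT
    exact hF _ hzT _ (Real.rpow_pos_of_pos hT r)
  · rw [indicator_of_mem (mem_Ioi.2 hr)]
    exact hlim.comp (hz.prodMk (tendsto_rpow_atTop hr))

theorem tendsto_integral_div_log (ha : -1 < a) (ha0 : a ≤ 0) (hC : 0 ≤ C)
    (hmeas : Measurable F.uncurry)
    (hF : ∀ z ∈ Ioo (0 : ℝ) 1, ∀ x, 0 < x → |F z x| ≤ C * min 1 x * (1 - z) ^ a)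
    (hlim : Tendsto F.uncurry (𝓝[>] 0 ×ˢ atTop) (𝓝 ℓ)) :
    Tendsto (fun T : ℝ => (∫ x in (0 : ℝ)..T, F (x / T) x / x) / Real.log T) atTop (𝓝 ℓ) := by
  have hIoo : ∫ r in Iio (1 : ℝ), (Ioi 0).indicator (fun _ => ℓ) r = ℓ := by
    rw [setIntegral_indicator measurableSet_Ioi, inter_comm, Ioi_inter_Iio]
    simp
  have hdct : Tendsto (fun T : ℝ => ∫ r in Iio (1 : ℝ), F (T ^ r / T) (T ^ r)) atTop (𝓝 ℓ) := by
    rw [← hIoo]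
    refine tendsto_integral_filter_of_dominated_convergence
      (fun r => C * (Real.exp r * (1 - Real.exp (r - 1)) ^ a)) ?_ ?_
      ((integrableOn_exp_mul_one_sub_exp_rpow ha).const_mul C) ?_
    · exact Eventually.of_forall fun T =>
        (hmeas.comp (f := fun r : ℝ => (T ^ r / T, T ^ r)) (by fun_prop)).aestronglyMeasurable
    · filter_upwards [eventually_ge_atTop (Real.exp 1)] with T hT
      filter_upwards [ae_restrict_mem measurableSet_Iio] with r hr
      exact abs_comp_const_rpow_le ha0 hC hF hT hr
    · filter_upwards [ae_restrict_mem measurableSet_Iio, Measure.ae_ne _ 0] with r hr hr0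
      exact tendsto_comp_const_rpow hlim hF hr hr0
  refine hdct.congr' ?_
  filter_upwards [eventually_gt_atTop 1] with T hT
  rw [integral_div_eq_log_mul_integral_const_rpow hT fun x => F (x / T) x,
    mul_div_cancel_left₀ _ (Real.log_pos hT).ne']

end LogarithmicAverage

theorem integral_mul_exp_neg_mul (c : ℝ) :
    ∫ v in (0 : ℝ)..1, c * Real.exp (-(c * v)) = 1 - Real.exp (-c) := by
  rw [intervalIntegral.integral_const_mul, mul_integral_comp_mul_left (f := fun u => Real.exp (-u)),
    integral_comp_neg Real.exp, integral_exp]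
  simp

theorem tendstoUniformlyOn_mul_exp_neg_mul {θ : ℝ} {u : Set ℝ} (hθ : 0 < θ) (hu : u ∈ 𝓝 (0 : ℝ)) :
    TendstoUniformlyOn (fun x v : ℝ => θ * x * Real.exp (-(θ * x * v))) 0 atTop (Ioc 0 1 \ u) := by
  obtain ⟨ε, hε, hεu⟩ := Metric.mem_nhds_iff.1 hu
  have hlim : Tendsto (fun x : ℝ => θ * (x * Real.exp (-(θ * ε * x)))) atTop (𝓝 0) := by
    simpa using (tendsto_rpow_mul_exp_neg_mul_atTop_nhds_zero 1 (θ * ε) (by positivity)).const_mul θ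
  rw [Metric.tendstoUniformlyOn_iff]
  intro δ hδ
  filter_upwards [hlim.eventually (gt_mem_nhds hδ), eventually_ge_atTop 0] with x hxδ hx v hv
  have hεv : ε ≤ v := by
    by_contra! hlt
    exact hv.2 (hεu (by simpa [abs_of_pos hv.1.1] using hlt))
  rw [Pi.zero_apply, dist_zero_left, Real.norm_of_nonneg (by positivity)]
  refine lt_of_le_of_lt ?_ hxδ
  rw [mul_assoc, mul_right_comm θ ε x]
  gcongr

/-- The Laplace transform `∫₀¹ e^{-θxv} φ(v) dv` of a function on `[0, 1]`, multiplied by `x` so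
that it converges to `φ(0+) / θ` as `x → ∞`. -/
noncomputable def scaledLaplace (θ : ℝ) (φ : ℝ → ℝ) (x : ℝ) : ℝ :=
  x * ∫ v in (0 : ℝ)..1, Real.exp (-(θ * x * v)) * φ v

namespace scaledLaplace

variable {θ x : ℝ} {φ ψ : ℝ → ℝ}

theorem intervalIntegrable (θ x : ℝ) (hφ : IntervalIntegrable φ volume 0 1) :
    IntervalIntegrable (fun v => Real.exp (-(θ * x * v)) * φ v) volume 0 1 :=
  hφ.continuousOn_mul (by fun_prop)

theorem const_mul (θ c : ℝ) (φ : ℝ → ℝ) (x : ℝ) :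
    scaledLaplace θ (fun v => c * φ v) x = c * scaledLaplace θ φ x := by
  simp only [scaledLaplace, mul_left_comm _ c, intervalIntegral.integral_const_mul]

theorem sub (hφ : IntervalIntegrable φ volume 0 1) (hψ : IntervalIntegrable ψ volume 0 1) :
    scaledLaplace θ (fun v => φ v - ψ v) x = scaledLaplace θ φ x - scaledLaplace θ ψ x := by
  simp only [scaledLaplace, mul_sub, intervalIntegral.integral_sub (intervalIntegrable θ x hφ)
    (intervalIntegrable θ x hψ)]

theorem abs_le_of_abs_le (hx : 0 ≤ x) (hψ : IntervalIntegrable ψ volume 0 1)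
    (h : ∀ v ∈ Ioo (0 : ℝ) 1, |φ v| ≤ ψ v) : |scaledLaplace θ φ x| ≤ scaledLaplace θ ψ x := by
  rw [scaledLaplace, abs_mul, abs_of_nonneg hx]
  refine mul_le_mul_of_nonneg_left ?_ hx
  rw [← Real.norm_eq_abs]
  refine norm_integral_le_of_norm_le zero_le_one ?_ (intervalIntegrable θ x hψ)
  filter_upwards [Measure.ae_ne volume 1] with v hv1 hv
  rw [norm_mul, Real.norm_of_nonneg (Real.exp_pos _).le]
  exact mul_le_mul_of_nonneg_left (h v ⟨hv.1, hv.2.lt_of_ne hv1⟩) (Real.exp_pos _).le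

theorem abs_le_mul_integral_abs (hθ : 0 ≤ θ) (hx : 0 ≤ x) (hφ : IntervalIntegrable φ volume 0 1) :
    |scaledLaplace θ φ x| ≤ x * ∫ v in (0 : ℝ)..1, |φ v| := by
  rw [scaledLaplace, abs_mul, abs_of_nonneg hx]
  refine mul_le_mul_of_nonneg_left ?_ hx
  rw [← Real.norm_eq_abs]
  refine norm_integral_le_of_norm_le zero_le_one (Eventually.of_forall fun v hv => ?_) hφ.abs
  rw [norm_mul, Real.norm_of_nonneg (Real.exp_pos _).le]
  have hv0 : 0 ≤ v := hv.1.le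
  refine mul_le_of_le_one_left (norm_nonneg _) (Real.exp_le_one_iff.2 ?_)
  exact neg_nonpos.2 (by positivity)

theorem tendsto_atTop (hθ : 0 < θ) (hφ : IntervalIntegrable φ volume 0 1) {a : ℝ}
    (hlim : Tendsto φ (𝓝[>] 0) (𝓝 a)) : Tendsto (scaledLaplace θ φ) atTop (𝓝 (a / θ)) := by
  have hmass : Tendsto (fun x => ∫ v in Ioc (0 : ℝ) 1, θ * x * Real.exp (-(θ * x * v))) atTop
      (𝓝 1) := by
    have hexp : Tendsto (fun x => Real.exp (-(θ * x))) atTop (𝓝 0) :=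
      Real.tendsto_exp_neg_atTop_nhds_zero.comp (tendsto_id.const_mul_atTop hθ)
    simpa only [← integral_of_le zero_le_one, integral_mul_exp_neg_mul, sub_zero]
      using hexp.const_sub 1
  have hpeak := tendsto_setIntegral_peak_smul_of_integrableOn_of_tendsto (μ := volume)
    (x₀ := (0 : ℝ)) (l := atTop) (φ := fun x v : ℝ => θ * x * Real.exp (-(θ * x * v)))
    measurableSet_Ioc measurableSet_Ioc Subset.rfl self_mem_nhdsWithin measure_Ioc_lt_top.ne
    ((eventually_ge_atTop 0).mono fun x hx v _ => by positivity)
    (fun u hu h0 => tendstoUniformlyOn_mul_exp_neg_mul hθ (hu.mem_nhds h0)) hmass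
    (Eventually.of_forall fun x => by fun_prop)
    ((intervalIntegrable_iff_integrableOn_Ioc_of_le zero_le_one).1 hφ)
    (hlim.mono_left (nhdsWithin_mono _ Ioc_subset_Ioi_self))
  refine (hpeak.div_const θ).congr fun x => ?_
  rw [scaledLaplace, integral_of_le zero_le_one]
  simp only [smul_eq_mul, mul_assoc, MeasureTheory.integral_const_mul]
  exact mul_div_cancel_left₀ _ hθ.ne'

theorem exists_abs_le_mul_min (hθ : 0 < θ) (hφ : IntervalIntegrable φ volume 0 1) {a : ℝ}
    (hlim : Tendsto φ (𝓝[>] 0) (𝓝 a)) :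
    ∃ C, ∀ x, 0 < x → |scaledLaplace θ φ x| ≤ C * min 1 x := by
  obtain ⟨N, hN⟩ := eventually_atTop.1
    ((tendsto_atTop hθ hφ hlim).abs.eventually (gt_mem_nhds (lt_add_one |a / θ|)))
  set I := ∫ v in (0 : ℝ)..1, |φ v|
  have hI : 0 ≤ I := integral_nonneg zero_le_one fun v _ => abs_nonneg _
  refine ⟨max (|a / θ| + 1) (max 1 N * I), fun x hx => ?_⟩
  have hsmall := abs_le_mul_integral_abs hθ.le hx.le hφ
  rw [mul_min_of_nonneg _ _ (by positivity), mul_one]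
  refine le_min ?_ (hsmall.trans ?_)
  · rcases le_total N x with hNx | hNx
    · exact (hN x hNx).le.trans (le_max_left _ _)
    · refine hsmall.trans (le_trans ?_ (le_max_right _ _))
      gcongr
      exact hNx.trans (le_max_right _ _)
  · rw [mul_comm]
    gcongr
    exact (le_mul_of_one_le_left hI (le_max_left _ _)).trans (le_max_right _ _)

end scaledLaplace

/-- The weight `(1 - z v)^β (1 - v)^γ` into which the kernel `t^β (t - s)^γ` turns under the
substitution `t = T - (T - s) v`, with `z = (T - s) / T`. -/
noncomputable def kernelWeight (β γ z v : ℝ) : ℝ :=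
  (1 - z * v) ^ β * (1 - v) ^ γ

namespace kernelWeight

variable {β γ z v : ℝ}

theorem one_sub_mul_pos (hz : z < 1) (hv : v ∈ Icc (0 : ℝ) 1) : 0 < 1 - z * v := by
  rcases hv.1.eq_or_lt with rfl | hv0
  · simp
  · linarith [mul_lt_of_lt_one_left hv0 hz, hv.2]

theorem measurable (β γ : ℝ) : Measurable fun p : ℝ × ℝ => kernelWeight β γ p.1 p.2 := by
  unfold kernelWeight
  fun_prop

theorem intervalIntegrable (β : ℝ) (hγ : -1 < γ) (hz : z < 1) :
    IntervalIntegrable (kernelWeight β γ z) volume 0 1 := by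
  refine (intervalIntegrable_one_sub_rpow hγ).continuousOn_mul ?_
  rw [uIcc_of_le zero_le_one]
  exact (by fun_prop : ContinuousOn (fun v => 1 - z * v) (Icc 0 1)).rpow_const
    fun v hv => Or.inl (one_sub_mul_pos hz hv).ne'

theorem abs_sub_le (hz : z ∈ Ioo (0 : ℝ) 1) (hv : v ∈ Icc (0 : ℝ) 1) :
    |kernelWeight β γ z v - (1 - v) ^ γ| ≤ |(1 - z) ^ β - 1| * (1 - v) ^ γ := by
  obtain ⟨hz0, hz1⟩ := hz
  have hpos := one_sub_mul_pos hz1 hv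
  have hzv : z * v ≤ z := mul_le_of_le_one_right hz0.le hv.2
  have hzv0 : 0 ≤ z * v := mul_nonneg hz0.le hv.1
  have hw : 0 ≤ (1 - v) ^ γ := Real.rpow_nonneg (by linarith [hv.2]) γ
  rw [kernelWeight, ← sub_one_mul, abs_mul, abs_of_nonneg hw]
  refine mul_le_mul_of_nonneg_right ?_ hw
  rcases le_total 0 β with hβ | hβ
  · have hmono : (1 - z) ^ β ≤ (1 - z * v) ^ β :=
      Real.rpow_le_rpow (by linarith) (by linarith) hβ
    have hone : (1 - z * v) ^ β ≤ 1 := Real.rpow_le_one hpos.le (by linarith) hβ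
    exact abs_le_abs_of_nonpos (by linarith) (by linarith)
  · have hanti : (1 - z * v) ^ β ≤ (1 - z) ^ β :=
      Real.rpow_le_rpow_of_nonpos (by linarith) (by linarith) hβ
    have hone : 1 ≤ (1 - z * v) ^ β :=
      Real.one_le_rpow_of_pos_of_le_one_of_nonpos hpos (by linarith) hβ
    exact abs_le_abs_of_nonneg (by linarith) (by linarith)

theorem abs_le {p q : ℝ} (hp : 0 ≤ p) (hq : 0 ≤ q) (hpq : -(p + q) ≤ β)
    (hz : z ∈ Ioo (0 : ℝ) 1) (hv : v ∈ Ioo (0 : ℝ) 1) :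
    |kernelWeight β γ z v| ≤ (1 - z) ^ (-q) * (1 - v) ^ (γ - p) := by
  obtain ⟨⟨hz0, hz1⟩, hv0, hv1⟩ := hz, hv
  have hpos := one_sub_mul_pos hz1 ⟨hv0.le, hv1.le⟩
  have hzv : z * v ≤ z := mul_le_of_le_one_right hz0.le hv1.le
  have hvz : z * v ≤ v := mul_le_of_le_one_left hv0.le hz1.le
  have hz' : 0 < 1 - z := sub_pos.2 hz1
  have hv' : 0 < 1 - v := sub_pos.2 hv1
  rw [kernelWeight, abs_of_nonneg (by positivity)]
  calc (1 - z * v) ^ β * (1 - v) ^ γ ≤ (1 - z * v) ^ (-q + -p) * (1 - v) ^ γ := by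
        gcongr ?_ * _
        exact Real.rpow_le_rpow_of_exponent_ge hpos (by linarith [mul_pos hz0 hv0]) (by linarith)
    _ = (1 - z * v) ^ (-q) * (1 - z * v) ^ (-p) * (1 - v) ^ γ := by rw [Real.rpow_add hpos]
    _ ≤ (1 - z) ^ (-q) * (1 - v) ^ (-p) * (1 - v) ^ γ := by
        gcongr ?_ * ?_ * _
        · exact Real.rpow_le_rpow_of_nonpos hz' (by linarith) (by linarith)
        · exact Real.rpow_le_rpow_of_nonpos hv' (by linarith) (by linarith)
    _ = (1 - z) ^ (-q) * (1 - v) ^ (γ - p) := by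
        rw [mul_assoc, ← Real.rpow_add hv', neg_add_eq_sub]

end kernelWeight

theorem tendsto_one_sub_rpow_nhdsGT_zero (a : ℝ) :
    Tendsto (fun v : ℝ => (1 - v) ^ a) (𝓝[>] 0) (𝓝 1) := by
  have h : ContinuousAt (fun v : ℝ => (1 - v) ^ a) 0 :=
    (by fun_prop : ContinuousAt (fun v : ℝ => 1 - v) 0).rpow_const (by simp)
  simpa using h.tendsto.mono_left nhdsWithin_le_nhds

section KernelLaplace

variable {β γ θ : ℝ}

theorem measurable_scaledLaplace_kernelWeight (β γ θ : ℝ) :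
    Measurable fun p : ℝ × ℝ => scaledLaplace θ (kernelWeight β γ p.1) p.2 := by
  have hintegrand : Measurable fun p : (ℝ × ℝ) × ℝ =>
      Real.exp (-(θ * p.1.2 * p.2)) * kernelWeight β γ p.1.1 p.2 :=
    (by fun_prop : Measurable fun p : (ℝ × ℝ) × ℝ => Real.exp (-(θ * p.1.2 * p.2))).mul
      ((kernelWeight.measurable β γ).comp (by fun_prop : Measurable fun p : (ℝ × ℝ) × ℝ =>
        (p.1.1, p.2)))
  unfold scaledLaplace
  simp only [integral_of_le (zero_le_one (α := ℝ))]
  exact measurable_snd.mul (hintegrand.stronglyMeasurable.integral_prod_right'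
    (ν := volume.restrict (Ioc 0 1))).measurable

theorem exists_abs_scaledLaplace_kernelWeight_le (hθ : 0 < θ) {p q : ℝ} (hp : 0 ≤ p)
    (hpγ : p < γ + 1) (hq : 0 ≤ q) (hpq : -(p + q) ≤ β) :
    ∃ C, ∀ z ∈ Ioo (0 : ℝ) 1, ∀ x, 0 < x →
      |scaledLaplace θ (kernelWeight β γ z) x| ≤ C * min 1 x * (1 - z) ^ (-q) := by
  have hint : IntervalIntegrable (fun v : ℝ => (1 - v) ^ (γ - p)) volume 0 1 :=
    intervalIntegrable_one_sub_rpow (by linarith)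
  obtain ⟨C, hbound⟩ :=
    scaledLaplace.exists_abs_le_mul_min hθ hint (tendsto_one_sub_rpow_nhdsGT_zero _)
  refine ⟨C, fun z hz x hx => ?_⟩
  have hz' : 0 ≤ (1 - z) ^ (-q) := Real.rpow_nonneg (by linarith [hz.2]) _
  calc |scaledLaplace θ (kernelWeight β γ z) x|
      ≤ scaledLaplace θ (fun v => (1 - z) ^ (-q) * (1 - v) ^ (γ - p)) x :=
        scaledLaplace.abs_le_of_abs_le hx.le (hint.const_mul _)
          fun v hv => kernelWeight.abs_le hp hq hpq hz hv
    _ = (1 - z) ^ (-q) * scaledLaplace θ (fun v => (1 - v) ^ (γ - p)) x :=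
        scaledLaplace.const_mul _ _ _ _
    _ ≤ (1 - z) ^ (-q) * (C * min 1 x) :=
        mul_le_mul_of_nonneg_left ((le_abs_self _).trans (hbound x hx)) hz'
    _ = C * min 1 x * (1 - z) ^ (-q) := mul_comm _ _

theorem abs_scaledLaplace_kernelWeight_sub_le (hγ : -1 < γ) {z x : ℝ} (hz : z ∈ Ioo (0 : ℝ) 1)
    (hx : 0 ≤ x) :
    |scaledLaplace θ (kernelWeight β γ z) x - scaledLaplace θ (fun v => (1 - v) ^ γ) x| ≤
      |(1 - z) ^ β - 1| * scaledLaplace θ (fun v => (1 - v) ^ γ) x := by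
  have hint := intervalIntegrable_one_sub_rpow hγ
  rw [← scaledLaplace.sub (kernelWeight.intervalIntegrable β hγ hz.2) hint,
    ← scaledLaplace.const_mul]
  exact scaledLaplace.abs_le_of_abs_le hx (hint.const_mul _)
    fun v hv => kernelWeight.abs_sub_le hz (Ioo_subset_Icc_self hv)

theorem tendsto_scaledLaplace_kernelWeight (β : ℝ) (hγ : -1 < γ) (hθ : 0 < θ) :
    Tendsto (fun p : ℝ × ℝ => scaledLaplace θ (kernelWeight β γ p.1) p.2) (𝓝[>] 0 ×ˢ atTop)
      (𝓝 (1 / θ)) := by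
  have hlimit : Tendsto (fun p : ℝ × ℝ => scaledLaplace θ (fun v => (1 - v) ^ γ) p.2)
      (𝓝[>] 0 ×ˢ atTop) (𝓝 (1 / θ)) :=
    (scaledLaplace.tendsto_atTop hθ (intervalIntegrable_one_sub_rpow hγ)
      (tendsto_one_sub_rpow_nhdsGT_zero γ)).comp tendsto_snd
  have herror : Tendsto (fun p : ℝ × ℝ => |(1 - p.1) ^ β - 1| *
      scaledLaplace θ (fun v => (1 - v) ^ γ) p.2) (𝓝[>] 0 ×ˢ atTop) (𝓝 0) := by
    simpa using (((tendsto_one_sub_rpow_nhdsGT_zero β).comp tendsto_fst).sub_const 1).abs.mul hlimit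
  refine tendsto_of_tendsto_of_dist hlimit (squeeze_zero' ?_ ?_ herror)
  · exact Eventually.of_forall fun p => dist_nonneg
  · filter_upwards [prod_mem_prod (Ioo_mem_nhdsGT one_pos) (Ioi_mem_atTop (0 : ℝ))] with p hp
    rw [dist_comm, Real.dist_eq]
    exact abs_scaledLaplace_kernelWeight_sub_le hγ hp.1 (le_of_lt hp.2)

end KernelLaplace

/-- The factor `(1 - z)^{2α} (x ∫₀¹ e^{-θxv} (1 - z v)^β (1 - v)^γ dv)²` which, multiplied by
`x^{2γ}` and evaluated at `x = T - s` and `z = x / T`, is the density at time `s` of the second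
moment at time `T`, normalised by `T^{2α+2β}`. -/
noncomputable def energyDensity (α β γ θ z x : ℝ) : ℝ :=
  (1 - z) ^ (2 * α) * scaledLaplace θ (kernelWeight β γ z) x ^ 2

section EnergyDensity

variable {α β γ θ : ℝ}

theorem measurable_energyDensity (α β γ θ : ℝ) : Measurable (energyDensity α β γ θ).uncurry :=
  (by fun_prop : Measurable fun p : ℝ × ℝ => (1 - p.1) ^ (2 * α)).mul
    ((measurable_scaledLaplace_kernelWeight β γ θ).pow_const 2)

theorem exists_abs_energyDensity_le (hα : -(1 / 2) < α) (hγ : -1 < γ)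
    (hαβγ : -(3 / 2) < α + β + γ) (hθ : 0 < θ) :
    ∃ a C : ℝ, -1 < a ∧ a ≤ 0 ∧ 0 ≤ C ∧ ∀ z ∈ Ioo (0 : ℝ) 1, ∀ x, 0 < x →
      |energyDensity α β γ θ z x| ≤ C * min 1 x * (1 - z) ^ a := by
  obtain ⟨η, hη, hη_le⟩ : ∃ η : ℝ, 0 < η ∧
      η ≤ min (min (1 / 2) (α + 1 / 2)) (min (γ + 1) ((α + β + γ + 3 / 2) / 2)) :=
    ⟨_, lt_min (lt_min (by norm_num) (by linarith)) (lt_min (by linarith) (by linarith)), le_rfl⟩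
  obtain ⟨⟨hη_half, hη_α⟩, hη_γ, hη_sum⟩ : (η ≤ 1 / 2 ∧ η ≤ α + 1 / 2) ∧
      η ≤ γ + 1 ∧ η ≤ (α + β + γ + 3 / 2) / 2 := by simpa only [le_min_iff] using hη_le
  obtain ⟨C, hbound⟩ := exists_abs_scaledLaplace_kernelWeight_le (β := β) (γ := γ) hθ
    (p := γ + 1 - η) (q := α + 1 / 2 - η) (by linarith) (by linarith) (by linarith) (by linarith)
  refine ⟨2 * η - 1, C ^ 2, by linarith, by linarith, by positivity, fun z hz x hx => ?_⟩
  have hz' : 0 < 1 - z := sub_pos.2 hz.2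
  have hpow : (1 - z) ^ (2 * α) * ((1 - z) ^ (-(α + 1 / 2 - η))) ^ 2 = (1 - z) ^ (2 * η - 1) := by
    rw [← Real.rpow_mul_natCast hz'.le, ← Real.rpow_add hz']
    congr 1
    push_cast
    ring
  have hmin : min 1 x ^ 2 ≤ min 1 x :=
    pow_le_of_le_one (by positivity) (min_le_left _ _) two_ne_zero
  rw [energyDensity, abs_mul, abs_pow, abs_of_pos (Real.rpow_pos_of_pos hz' _)]
  calc (1 - z) ^ (2 * α) * |scaledLaplace θ (kernelWeight β γ z) x| ^ 2
      ≤ (1 - z) ^ (2 * α) * (C * min 1 x * (1 - z) ^ (-(α + 1 / 2 - η))) ^ 2 := by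
        gcongr
        exact hbound z hz x hx
    _ = C ^ 2 * min 1 x ^ 2 * (1 - z) ^ (2 * η - 1) := by rw [← hpow]; ring
    _ ≤ C ^ 2 * min 1 x * (1 - z) ^ (2 * η - 1) := by gcongr

theorem tendsto_energyDensity (α β : ℝ) (hγ : -1 < γ) (hθ : 0 < θ) :
    Tendsto (energyDensity α β γ θ).uncurry (𝓝[>] 0 ×ˢ atTop) (𝓝 (1 / θ ^ 2)) := by
  simpa [Function.uncurry_def, energyDensity] using
    ((tendsto_one_sub_rpow_nhdsGT_zero (2 * α)).comp tendsto_fst).mul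
      ((tendsto_scaledLaplace_kernelWeight β hγ hθ).pow 2)

end EnergyDensity

section ChangeOfVariables

theorem exp_mul_rpow_mul_rpow_sub_eq {T x v : ℝ} (β γ θ : ℝ) (hx : 0 < x) (hxT : x < T)
    (hv : v ∈ Ioo (0 : ℝ) 1) :
    Real.exp (θ * (T - x * v)) * (T - x * v) ^ β * (T - x * v - (T - x)) ^ γ =
      Real.exp (θ * T) * T ^ β * x ^ γ *
        (Real.exp (-(θ * x * v)) * kernelWeight β γ (x / T) v) := by
  have hT : 0 < T := hx.trans hxT
  have hpos : 0 < 1 - x / T * v :=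
    kernelWeight.one_sub_mul_pos ((div_lt_one hT).2 hxT) (Ioo_subset_Icc_self hv)
  have hexp : θ * (T - x * v) = θ * T + -(θ * x * v) := by ring
  have hbase : T - x * v = T * (1 - x / T * v) := by field_simp
  have hlag : T - x * v - (T - x) = x * (1 - v) := by ring
  rw [hexp, hlag, hbase, Real.exp_add, Real.mul_rpow hT.le hpos.le,
    Real.mul_rpow hx.le (sub_nonneg.2 hv.2.le), kernelWeight]
  ring

theorem integral_exp_mul_kernel_eq {T x : ℝ} (β γ θ : ℝ) (hx : 0 < x) (hxT : x < T) :
    ∫ t in (T - x)..T, Real.exp (θ * t) * t ^ β * (t - (T - x)) ^ γ =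
      Real.exp (θ * T) * T ^ β * x ^ γ * scaledLaplace θ (kernelWeight β γ (x / T)) x := by
  have hsub := smul_integral_comp_sub_mul (a := 0) (b := 1)
    (fun t : ℝ => Real.exp (θ * t) * t ^ β * (t - (T - x)) ^ γ) x T
  rw [mul_one, mul_zero, sub_zero, smul_eq_mul] at hsub
  rw [← hsub, scaledLaplace, mul_left_comm]
  congr 1
  rw [← intervalIntegral.integral_const_mul]
  exact integral_congr_Ioo_of_le zero_le_one
    fun v hv => exp_mul_rpow_mul_rpow_sub_eq β γ θ hx hxT hv

theorem exp_mul_integral_sq_eq {T : ℝ} (α β γ θ : ℝ) (hT : 0 < T) :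
    Real.exp (-(2 * θ * T)) * ∫ s in (0 : ℝ)..T, s ^ (2 * α) *
      (∫ t in s..T, Real.exp (θ * t) * t ^ β * (t - s) ^ γ) ^ 2 =
    T ^ (2 * α + 2 * β) * ∫ x in (0 : ℝ)..T, energyDensity α β γ θ (x / T) x * x ^ (2 * γ) := by
  have hreflect := integral_comp_sub_left (a := 0) (b := T) (fun s : ℝ => s ^ (2 * α) *
    (∫ t in s..T, Real.exp (θ * t) * t ^ β * (t - s) ^ γ) ^ 2) T
  rw [sub_self, sub_zero] at hreflect
  rw [← hreflect, ← intervalIntegral.integral_const_mul, ← intervalIntegral.integral_const_mul]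
  refine integral_congr_Ioo_of_le hT.le fun x hmem => ?_
  obtain ⟨hx, hxT⟩ := hmem
  have hbase : T - x = T * (1 - x / T) := by field_simp
  have hz : 0 ≤ 1 - x / T := sub_nonneg.2 ((div_le_one hT).2 hxT.le)
  have hexp : Real.exp (-(2 * θ * T)) * Real.exp (θ * T) ^ 2 = 1 := by
    rw [← Real.exp_nat_mul, ← Real.exp_add, Real.exp_eq_one_iff]
    push_cast
    ring
  have hsq (y e : ℝ) (hy : 0 < y) : y ^ (2 * e) = (y ^ e) ^ 2 := by
    rw [mul_comm, ← Nat.cast_two, Real.rpow_mul_natCast hy.le]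
  simp only [energyDensity]
  rw [integral_exp_mul_kernel_eq β γ θ hx hxT, congrArg (· ^ (2 * α)) hbase,
    Real.mul_rpow hT.le hz, Real.rpow_add hT, hsq T β hT, hsq x γ hx]
  linear_combination T ^ (2 * α) * (1 - x / T) ^ (2 * α) * (T ^ β) ^ 2 * (x ^ γ) ^ 2 *
    scaledLaplace θ (kernelWeight β γ (x / T)) x ^ 2 * hexp

end ChangeOfVariables

/-- Lemma 4.5, case `γ = -1/2`: asymptotics of
`E(e^{-θT} ∫₀ᵀ e^{θs} dX_s)²`. -/
theorem stmt_16 (α β θ : ℝ) (hα : -(1/2 : ℝ) < α) (hαβ : -1 < α + β)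
    (hθ : 0 < θ)
    (G : ℝ → ℝ)
    (hG : ∀ T : ℝ, G T = Real.exp (-(2 * θ * T)) * ∫ s in (0:ℝ)..T, s ^ (2*α) *
      (∫ t in s..T, Real.exp (θ * t) * t ^ β * (t - s) ^ (-(1/2 : ℝ))) ^ 2) :
    Tendsto (fun T : ℝ => G T / (T ^ (2*α+2*β) * Real.log T)) atTop
      (nhds (1 / θ ^ (2 : ℕ))) := by
  have hγ : (-1 : ℝ) < -(1 / 2) := by norm_num
  obtain ⟨a, C, ha, ha0, hC, hbound⟩ :=
    exists_abs_energyDensity_le (β := β) hα hγ (by linarith) hθ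
  refine (tendsto_integral_div_log ha ha0 hC (measurable_energyDensity α β _ θ) hbound
    (tendsto_energyDensity α β hγ hθ)).congr' ?_
  filter_upwards [eventually_gt_atTop 0] with T hT
  have hpow : T ^ (2 * α + 2 * β) ≠ 0 := (Real.rpow_pos_of_pos hT _).ne'
  have hexponent : 2 * -(1 / 2 : ℝ) = -1 := by norm_num
  rw [hG T, exp_mul_integral_sq_eq α β _ θ hT, mul_div_mul_left _ _ hpow, hexponent]
  simp only [Real.rpow_neg_one, div_eq_mul_inv]
end

section
/- Let α, β, γ be real numbers with α > -1/2, γ > -1, α + β + γ > -3/2, let θ > 0 and fix s > 0. For T > s define K(T) = e^{−θT} ∫₀ˢ r^{2α} (∫ᵣˢ u^β (u−r)^γ du) (∫ᵣᵀ e^{θt} t^β (t−r)^γ dt) dr. Then lim_{T→+∞} T^{−(β+γ)} K(T) = B(2α+1, γ+1) s^{2α+β+γ+2} / (θ (2α+β+γ+2)), where B(a,b) = Γ(a)Γ(b)/Γ(a+b) is the Beta function. -/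
open MeasureTheory Filter intervalIntegral

open Set Topology Asymptotics

/-!
By Fubini, `K(T) = e^{-θT} ∫₀ᵀ e^{θt} G(t) dt`, where `G(t) = ∂/∂t E[X_s X_t]` equals
`t^β ∫₀ˢ w(r) (t - r)^γ dr` for `t ≥ s`, with `w(r) = r^{2α} ∫ᵣˢ u^β (u - r)^γ du`. As `t → ∞`,
dominated convergence gives `G(t) ~ t^{β+γ} ∫₀ˢ w`, and L'Hôpital's rule for the quotient of
`∫₀ᵀ e^{θt} G(t) dt` by `T^{β+γ} e^{θT}` produces the limit `θ⁻¹ ∫₀ˢ w`. A second use of Fubini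
reduces `∫₀ˢ w` to a Beta integral. All integrability follows from
`∫ᵣᵇ u^β (u - r)^γ du ≤ C r^{-p}` for every `p ≥ 0` with `p > -(β + γ + 1)`.
-/

theorem intervalIntegrable_and_integral_eq_sub_of_hasDerivAt_of_nonneg {φ φ' : ℝ → ℝ} {a b : ℝ}
    (hab : a ≤ b) (hderiv : ∀ t ∈ Icc a b, HasDerivAt φ (φ' t) t) (hφ' : ∀ t ∈ Icc a b, 0 ≤ φ' t) :
    IntervalIntegrable φ' volume a b ∧ ∫ t in a..b, φ' t = φ b - φ a := by
  rw [← uIcc_of_le hab] at hderiv hφ'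
  have hint : IntervalIntegrable φ' volume a b :=
    intervalIntegrable_deriv_of_nonneg (HasDerivAt.continuousOn hderiv)
      (fun t ht => hderiv t (Ioo_subset_Icc_self ht)) fun t ht => hφ' t (Ioo_subset_Icc_self ht)
  exact ⟨hint, integral_eq_sub_of_hasDerivAt hderiv hint⟩

theorem isLittleO_integral_atTop_of_isLittleO_deriv {E : Type*} [NormedAddCommGroup E]
    [NormedSpace ℝ E] {f : ℝ → E} {φ φ' : ℝ → ℝ} {a : ℝ}
    (hf : ∀ᶠ T in atTop, IntervalIntegrable f volume a T)
    (hderiv : ∀ᶠ t in atTop, HasDerivAt φ (φ' t) t) (hφ' : ∀ᶠ t in atTop, 0 ≤ φ' t)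
    (hφ : Tendsto φ atTop atTop) (hfφ' : f =o[atTop] φ') :
    (fun T => ∫ t in a..T, f t) =o[atTop] φ := by
  refine isLittleO_iff.2 fun ε hε => ?_
  obtain ⟨b, hb⟩ := eventually_atTop.1 <| hf.and <| hderiv.and <| hφ'.and <|
    (hφ.eventually_ge_atTop 0).and (isLittleO_iff.1 hfφ' (half_pos hε))
  have hconst : ∀ᶠ T in atTop, ‖∫ t in a..b, f t‖ ≤ ε / 2 * φ T :=
    (hφ.const_mul_atTop (half_pos hε)).eventually_ge_atTop _
  filter_upwards [hconst, eventually_ge_atTop b] with T hT hbT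
  obtain ⟨hfb, -, -, hφb, -⟩ := hb b le_rfl
  obtain ⟨hfT, -, -, hφT, -⟩ := hb T hbT
  obtain ⟨hint, hftc⟩ := intervalIntegrable_and_integral_eq_sub_of_hasDerivAt_of_nonneg hbT
    (fun t ht => (hb t ht.1).2.1) fun t ht => (hb t ht.1).2.2.1
  have htail : ‖∫ t in b..T, f t‖ ≤ ε / 2 * (φ T - φ b) := by
    rw [← hftc, ← intervalIntegral.integral_const_mul]
    refine norm_integral_le_of_norm_le hbT (.of_forall fun t ht => ?_) (hint.const_mul _)
    obtain ⟨-, -, hpos, -, hle⟩ := hb t ht.1.le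
    rwa [Real.norm_of_nonneg hpos] at hle
  calc ‖∫ t in a..T, f t‖ = ‖(∫ t in a..b, f t) + ∫ t in b..T, f t‖ := by
        rw [integral_add_adjacent_intervals hfb (hfb.symm.trans hfT)]
    _ ≤ ε / 2 * φ T + ε / 2 * (φ T - φ b) := norm_add_le_of_le hT htail
    _ ≤ ε * ‖φ T‖ := by
        rw [Real.norm_of_nonneg hφT]
        linarith [mul_nonneg (half_pos hε).le hφb]

theorem tendsto_integral_div_atTop_of_tendsto_div_deriv {f φ φ' : ℝ → ℝ} {a L : ℝ}
    (hf : ∀ᶠ T in atTop, IntervalIntegrable f volume a T)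
    (hderiv : ∀ᶠ t in atTop, HasDerivAt φ (φ' t) t) (hφ' : ∀ᶠ t in atTop, 0 < φ' t)
    (hφ : Tendsto φ atTop atTop) (hlim : Tendsto (fun t => f t / φ' t) atTop (𝓝 L)) :
    Tendsto (fun T => (∫ t in a..T, f t) / φ T) atTop (𝓝 L) := by
  obtain ⟨b, hb⟩ := eventually_atTop.1 (hf.and (hderiv.and hφ'))
  have hfint : ∀ T, b ≤ T → IntervalIntegrable f volume b T := fun T hT =>
    (hb b le_rfl).1.symm.trans (hb T hT).1
  have hftc : ∀ T, b ≤ T → IntervalIntegrable φ' volume b T ∧ ∫ t in b..T, φ' t = φ T - φ b :=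
    fun T hT => intervalIntegrable_and_integral_eq_sub_of_hasDerivAt_of_nonneg hT
      (fun t ht => (hb t ht.1).2.1) fun t ht => (hb t ht.1).2.2.le
  have hdiff : (fun t => f t - L * φ' t) =o[atTop] φ' := by
    refine (isLittleO_iff_tendsto' (hφ'.mono fun t ht h => (ht.ne' h).elim)).2 ?_
    refine (sub_self L ▸ hlim.sub_const L).congr' ?_
    filter_upwards [hφ'] with t ht
    field_simp
  have hrem : (fun T => ∫ t in b..T, (f t - L * φ' t)) =o[atTop] φ :=
    isLittleO_integral_atTop_of_isLittleO_deriv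
      ((eventually_ge_atTop b).mono fun T hT => (hfint T hT).sub ((hftc T hT).1.const_mul L))
      hderiv (hφ'.mono fun _ => le_of_lt) hφ hdiff
  have hconst : Tendsto (fun T => ((∫ t in a..b, f t) - L * φ b) / φ T) atTop (𝓝 0) :=
    tendsto_const_nhds.div_atTop hφ
  have hsum := (hrem.tendsto_div_nhds_zero.add hconst).add_const L
  rw [add_zero, zero_add] at hsum
  refine hsum.congr' ?_
  filter_upwards [eventually_ge_atTop b, hφ.eventually_gt_atTop 0] with T hT hφT
  obtain ⟨hint, heq⟩ := hftc T hT
  rw [integral_sub (hfint T hT) (hint.const_mul L), intervalIntegral.integral_const_mul,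
    heq, ← integral_add_adjacent_intervals (hb b le_rfl).1 (hfint T hT)]
  field_simp
  ring

theorem tendsto_rpow_mul_exp_atTop (δ : ℝ) {θ : ℝ} (hθ : 0 < θ) :
    Tendsto (fun t : ℝ => t ^ δ * Real.exp (θ * t)) atTop atTop := by
  have h := tendsto_exp_mul_div_rpow_atTop (-δ) θ hθ
  refine h.congr' ?_
  filter_upwards [eventually_gt_atTop 0] with t ht
  rw [Real.rpow_neg ht.le, div_inv_eq_mul, mul_comm]

theorem tendsto_rpow_neg_mul_exp_neg_mul_integral_exp_mul {g : ℝ → ℝ} {a δ θ L : ℝ} (hθ : 0 < θ)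
    (hg : ∀ᶠ T in atTop, IntervalIntegrable (fun t => Real.exp (θ * t) * g t) volume a T)
    (hlim : Tendsto (fun t => t ^ (-δ) * g t) atTop (𝓝 L)) :
    Tendsto (fun T => T ^ (-δ) * (Real.exp (-(θ * T)) * ∫ t in a..T, Real.exp (θ * t) * g t))
      atTop (𝓝 (L / θ)) := by
  have hslope : Tendsto (fun t : ℝ => δ / t + θ) atTop (𝓝 θ) := by
    simpa using (tendsto_const_nhds (x := δ).div_atTop tendsto_id).add_const θ
  have hderiv : ∀ᶠ t : ℝ in atTop, HasDerivAt (fun t : ℝ => t ^ δ * Real.exp (θ * t))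
      (t ^ δ * Real.exp (θ * t) * (δ / t + θ)) t := by
    filter_upwards [eventually_gt_atTop 0] with t ht
    refine ((Real.hasDerivAt_rpow_const (.inl ht.ne')).mul
      ((hasDerivAt_id t).const_mul θ).exp).congr_deriv ?_
    rw [Real.rpow_sub_one ht.ne']
    simp only [id]
    ring
  have hpos : ∀ᶠ t : ℝ in atTop, 0 < t ^ δ * Real.exp (θ * t) * (δ / t + θ) := by
    filter_upwards [eventually_gt_atTop 0, hslope.eventually_const_lt hθ] with t ht hst
    positivity
  have hquot := tendsto_integral_div_atTop_of_tendsto_div_deriv hg hderiv hpos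
    (tendsto_rpow_mul_exp_atTop δ hθ) ((hlim.div hslope hθ.ne').congr' ?_)
  · refine hquot.congr' ?_
    filter_upwards [eventually_gt_atTop 0] with T hT
    rw [Real.rpow_neg hT.le, Real.exp_neg]
    field_simp
  · filter_upwards [eventually_gt_atTop 0] with t ht
    rw [Pi.div_apply, Real.rpow_neg ht.le]
    field_simp

theorem tendsto_integral_mul_comp_div {w h : ℝ → ℝ} {a b : ℝ}
    (hw : IntervalIntegrable w volume a b) (hh : Measurable h) (hh0 : ContinuousAt h 0) :
    Tendsto (fun t => ∫ r in a..b, w r * h (r / t)) atTop (𝓝 ((∫ r in a..b, w r) * h 0)) := by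
  rw [← intervalIntegral.integral_mul_const]
  have hdiv : ∀ r : ℝ, Tendsto (fun t => r / t) atTop (𝓝 0) := fun r =>
    tendsto_const_nhds.div_atTop tendsto_id
  obtain ⟨ε, hε, hball⟩ := Metric.eventually_nhds_iff_ball.1 <|
    hh0.norm.eventually_le_const (lt_add_one ‖h 0‖)
  obtain ⟨R, hR⟩ := (isCompact_uIcc (a := a) (b := b)).isBounded.exists_norm_le
  refine tendsto_integral_filter_of_dominated_convergence (fun r => ‖w r‖ * (‖h 0‖ + 1))
    (.of_forall fun t => ?_) ?_ (hw.norm.mul_const _)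
    (.of_forall fun r _ => (hh0.tendsto.comp (hdiv r)).const_mul (w r))
  · exact hw.def'.aestronglyMeasurable.mul (by fun_prop : Measurable _).aestronglyMeasurable
  · filter_upwards [eventually_gt_atTop 0, (hdiv R).eventually_lt_const hε] with t ht htε
    refine .of_forall fun r hr => ?_
    rw [norm_mul]
    gcongr
    refine hball _ ?_
    rw [mem_ball_zero_iff, norm_div, Real.norm_of_nonneg ht.le]
    refine lt_of_le_of_lt ?_ htε
    gcongr
    exact hR r (uIoc_subset_uIcc hr)

/-- The domain `{(r, t) : a < r ≤ s, r ≤ t ≤ T}` (for `s ≤ T`) of the iterated integrals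
`∫ r in a..s, ∫ t in r..T`, whose order of integration is to be exchanged. -/
def trapezoid (a s T : ℝ) : Set (ℝ × ℝ) := (Ioc a s ×ˢ Ioc a T) ∩ {q | q.1 ≤ q.2}

section Trapezoid

variable {E : Type*} [NormedAddCommGroup E] {F : ℝ → ℝ → E} {a s T : ℝ}

theorem measurableSet_trapezoid : MeasurableSet (trapezoid a s T) :=
  (measurableSet_Ioc.prod measurableSet_Ioc).inter measurableSet_le'

theorem trapezoid_subset_Icc_prod_Icc : trapezoid a s T ⊆ Icc a s ×ˢ Icc a T :=
  inter_subset_left.trans (prod_mono Ioc_subset_Icc_self Ioc_subset_Icc_self)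

theorem integrableOn_trapezoid_iff_integrable_indicator :
    IntegrableOn F.uncurry (trapezoid a s T) ↔
      Integrable ({q : ℝ × ℝ | q.1 ≤ q.2}.indicator F.uncurry)
        ((volume.restrict (Ioc a s)).prod (volume.restrict (Ioc a T))) := by
  rw [integrable_indicator_iff measurableSet_le', IntegrableOn, IntegrableOn,
    Measure.prod_restrict, Measure.restrict_restrict measurableSet_le', inter_comm]
  rfl

theorem Ioc_inter_Ici_of_mem {r : ℝ} (hr : r ∈ Ioc a s) : Ioc a T ∩ Ici r = Icc r T := by
  ext t
  exact ⟨fun ht => ⟨ht.2, ht.1.2⟩, fun ht => ⟨⟨hr.1.trans_le ht.1, ht.2⟩, ht.1⟩⟩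

section Swap

variable [NormedSpace ℝ E]

theorem integral_indicator_le_snd {r : ℝ} (hsT : s ≤ T) (hr : r ∈ Ioc a s) :
    ∫ t in Ioc a T, {q : ℝ × ℝ | q.1 ≤ q.2}.indicator F.uncurry (r, t) = ∫ t in r..T, F r t := by
  have hsec : (fun t => {q : ℝ × ℝ | q.1 ≤ q.2}.indicator F.uncurry (r, t)) =
      (Ici r).indicator (F r) := rfl
  rw [hsec, setIntegral_indicator measurableSet_Ici, Ioc_inter_Ici_of_mem hr,
    integral_Icc_eq_integral_Ioc, integral_of_le (hr.2.trans hsT)]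

theorem integral_indicator_fst_le {t : ℝ} (has : a ≤ s) (ht : t ∈ Ioc a T) :
    ∫ r in Ioc a s, {q : ℝ × ℝ | q.1 ≤ q.2}.indicator F.uncurry (r, t) =
      ∫ r in a..min s t, F r t := by
  have hsec : (fun r => {q : ℝ × ℝ | q.1 ≤ q.2}.indicator F.uncurry (r, t)) =
      (Iic t).indicator fun r => F r t := rfl
  rw [hsec, setIntegral_indicator measurableSet_Iic, Ioc_inter_Iic,
    integral_of_le (le_min has ht.1.le)]

theorem aestronglyMeasurable_integral_lower_limit (hsT : s ≤ T)
    (hF : AEStronglyMeasurable F.uncurry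
      ((volume.restrict (Ioc a s)).prod (volume.restrict (Ioc a T)))) :
    AEStronglyMeasurable (fun r => ∫ t in r..T, F r t) (volume.restrict (Ioc a s)) :=
  (hF.indicator measurableSet_le').integral_prod_right'.congr
    (ae_restrict_of_forall_mem measurableSet_Ioc fun _ hr => integral_indicator_le_snd hsT hr)

theorem integral_integral_swap_of_integrableOn_trapezoid (has : a ≤ s) (hsT : s ≤ T)
    (hF : IntegrableOn F.uncurry (trapezoid a s T)) :
    ∫ r in a..s, ∫ t in r..T, F r t = ∫ t in a..T, ∫ r in a..min s t, F r t := by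
  rw [integral_of_le has, integral_of_le (has.trans hsT),
    ← setIntegral_congr_fun measurableSet_Ioc fun r hr => integral_indicator_le_snd hsT hr,
    ← setIntegral_congr_fun measurableSet_Ioc fun t ht => integral_indicator_fst_le has ht]
  exact integral_integral_swap (integrableOn_trapezoid_iff_integrable_indicator.1 hF)

theorem intervalIntegrable_integral_of_integrableOn_trapezoid (has : a ≤ s) (hsT : s ≤ T)
    (hF : IntegrableOn F.uncurry (trapezoid a s T)) :
    IntervalIntegrable (fun t => ∫ r in a..min s t, F r t) volume a T := by
  rw [intervalIntegrable_iff_integrableOn_Ioc_of_le (has.trans hsT)]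
  exact (integrableOn_trapezoid_iff_integrable_indicator.1 hF).integral_prod_right.congr
    (ae_restrict_of_forall_mem measurableSet_Ioc fun t ht => integral_indicator_fst_le has ht)

end Swap

theorem integrableOn_trapezoid_of_intervalIntegrable_integral_norm (has : a ≤ s) (hsT : s ≤ T)
    (hF : AEStronglyMeasurable F.uncurry
      ((volume.restrict (Ioc a s)).prod (volume.restrict (Ioc a T))))
    (hsec : ∀ r ∈ Ioc a s, IntervalIntegrable (F r) volume r T)
    (hint : IntervalIntegrable (fun r => ∫ t in r..T, ‖F r t‖) volume a s) :
    IntegrableOn F.uncurry (trapezoid a s T) := by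
  rw [integrableOn_trapezoid_iff_integrable_indicator,
    integrable_prod_iff (hF.indicator measurableSet_le')]
  constructor
  · refine ae_restrict_of_forall_mem measurableSet_Ioc fun r hr => ?_
    change IntegrableOn ((Ici r).indicator (F r)) (Ioc a T)
    rw [integrableOn_indicator_iff measurableSet_Ici, inter_comm, Ioc_inter_Ici_of_mem hr,
      integrableOn_Icc_iff_integrableOn_Ioc]
    exact (hsec r hr).1
  · rw [intervalIntegrable_iff_integrableOn_Ioc_of_le has] at hint
    refine hint.congr (ae_restrict_of_forall_mem measurableSet_Ioc fun r hr => ?_)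
    simp only [norm_indicator_eq_indicator_norm]
    exact (integral_indicator_le_snd (F := fun r t => ‖F r t‖) hsT hr).symm

end Trapezoid

theorem integral_rpow_mul_sub_rpow {a b u : ℝ} (ha : -1 < a) (hb : -1 < b) (hu : 0 < u) :
    ∫ r in (0 : ℝ)..u, r ^ a * (u - r) ^ b =
      u ^ (a + b + 1) * ProbabilityTheory.beta (a + 1) (b + 1) := by
  have hbeta : ProbabilityTheory.beta (a + 1) (b + 1) =
      Complex.betaIntegral (a + 1 : ℝ) (b + 1 : ℝ) := by
    rw [Complex.betaIntegral_eq_Gamma_mul_div _ _ (by simp; linarith) (by simp; linarith)]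
    simp only [ProbabilityTheory.beta, ← Complex.ofReal_add, Complex.Gamma_ofReal]
    push_cast
    rfl
  rw [← Complex.ofReal_inj, Complex.ofReal_mul, hbeta, Complex.ofReal_cpow hu.le,
    ← intervalIntegral.integral_ofReal]
  convert Complex.betaIntegral_scaled (a + 1 : ℝ) (b + 1 : ℝ) hu using 1
  · refine integral_congr fun r hr => ?_
    rw [uIcc_of_le hu.le] at hr
    push_cast
    rw [Complex.ofReal_cpow hr.1, Complex.ofReal_cpow (sub_nonneg.2 hr.2)]
    simp
  · push_cast
    ring_nf

/-- The integral in the Volterra kernel `r^α ∫_r^b u^β (u - r)^γ du` of `X_b`; the singular weight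
`r^α` is left out, so that it can be absorbed in a general weight. -/
noncomputable def volterraFactor (β γ b r : ℝ) : ℝ := ∫ u in r..b, u ^ β * (u - r) ^ γ

section VolterraFactor

variable {β γ r b : ℝ}

theorem intervalIntegrable_sub_rpow (hγ : -1 < γ) :
    IntervalIntegrable (fun u => (u - r) ^ γ) volume r b := by
  simpa using (intervalIntegrable_rpow' (a := 0) (b := b - r) hγ).comp_sub_right r

theorem intervalIntegrable_rpow_mul_sub_rpow (hγ : -1 < γ) (hr : 0 < r) (hrb : r ≤ b) :
    IntervalIntegrable (fun u => u ^ β * (u - r) ^ γ) volume r b := by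
  refine (intervalIntegrable_sub_rpow hγ).continuousOn_mul ?_
  rw [uIcc_of_le hrb]
  exact continuousOn_id.rpow_const fun u hu => .inl (hr.trans_le hu.1).ne'

theorem volterraFactor_nonneg (hr : 0 ≤ r) (hrb : r ≤ b) : 0 ≤ volterraFactor β γ b r :=
  integral_nonneg hrb fun _ hu =>
    mul_nonneg (Real.rpow_nonneg (hr.trans hu.1) _) (Real.rpow_nonneg (sub_nonneg.2 hu.1) _)

theorem integral_sub_rpow (hγ : -1 < γ) :
    ∫ u in r..b, (u - r) ^ γ = (b - r) ^ (γ + 1) / (γ + 1) := by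
  rw [integral_comp_sub_right (· ^ γ), integral_rpow (.inl hγ), sub_self,
    Real.zero_rpow (by linarith), sub_zero]

theorem rpow_mul_sub_rpow_le {p m u : ℝ} (hp : 0 ≤ p) (hm : 0 ≤ m) (hβ : 0 ≤ β + p + m)
    (hr : 0 < r) (hu : u ∈ Ioo r b) :
    u ^ β * (u - r) ^ γ ≤ b ^ (β + p + m) * r ^ (-p) * (u - r) ^ (γ - m) := by
  have hu0 : 0 < u := hr.trans hu.1
  have hb : 0 < b := hu0.trans hu.2
  have hur : 0 < u - r := sub_pos.2 hu.1
  -- The negative powers split off from `u ^ β` increase when `u` is replaced by `r` or `u - r`.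
  calc u ^ β * (u - r) ^ γ = u ^ (β + p + m) * u ^ (-p) * (u ^ (-m) * (u - r) ^ γ) := by
        rw [← mul_assoc, ← Real.rpow_add hu0, ← Real.rpow_add hu0]
        ring_nf
    _ ≤ b ^ (β + p + m) * r ^ (-p) * ((u - r) ^ (-m) * (u - r) ^ γ) := by
        have hub : u ^ (β + p + m) ≤ b ^ (β + p + m) := Real.rpow_le_rpow hu0.le hu.2.le hβ
        have hup : u ^ (-p) ≤ r ^ (-p) :=
          Real.rpow_le_rpow_of_nonpos hr hu.1.le (neg_nonpos.2 hp)
        have hum : u ^ (-m) ≤ (u - r) ^ (-m) :=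
          Real.rpow_le_rpow_of_nonpos hur (sub_le_self u hr.le) (neg_nonpos.2 hm)
        gcongr
    _ = b ^ (β + p + m) * r ^ (-p) * (u - r) ^ (γ - m) := by
        rw [← Real.rpow_add hur, neg_add_eq_sub]

theorem exists_volterraFactor_le_rpow_neg {p : ℝ} (hγ : -1 < γ) (hp : 0 ≤ p)
    (hpβγ : -1 < β + γ + p) (b : ℝ) :
    ∃ C, ∀ r ∈ Ioc 0 b, volterraFactor β γ b r ≤ C * r ^ (-p) := by
  set m := max 0 (-(β + p))
  have hm : 0 ≤ m := le_max_left _ _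
  have hmβ : 0 ≤ β + p + m := by linarith [le_max_right 0 (-(β + p))]
  have hmγ : -1 < γ - m := by
    have : m < γ + 1 := max_lt (by linarith) (by linarith)
    linarith
  refine ⟨b ^ (β + p + m) * (b ^ (γ - m + 1) / (γ - m + 1)), fun r hr => ?_⟩
  have hb : 0 < b := hr.1.trans_le hr.2
  calc volterraFactor β γ b r
      ≤ ∫ u in r..b, b ^ (β + p + m) * r ^ (-p) * (u - r) ^ (γ - m) :=
        integral_mono_on_of_le_Ioo hr.2 (intervalIntegrable_rpow_mul_sub_rpow hγ hr.1 hr.2)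
          ((intervalIntegrable_sub_rpow hmγ).const_mul _)
          fun u hu => rpow_mul_sub_rpow_le hp hm hmβ hr.1 hu
    _ = b ^ (β + p + m) * ((b - r) ^ (γ - m + 1) / (γ - m + 1)) * r ^ (-p) := by
        rw [intervalIntegral.integral_const_mul, integral_sub_rpow hmγ]
        ring
    _ ≤ b ^ (β + p + m) * (b ^ (γ - m + 1) / (γ - m + 1)) * r ^ (-p) := by
        have hm1 : 0 < γ - m + 1 := by linarith
        have hr0 := hr.1.le
        have hrb : 0 ≤ b - r := sub_nonneg.2 hr.2
        gcongr
        linarith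

theorem aestronglyMeasurable_volterraFactor {s : ℝ} (hsb : s ≤ b) :
    AEStronglyMeasurable (volterraFactor β γ b) (volume.restrict (Ioc 0 s)) :=
  aestronglyMeasurable_integral_lower_limit hsb
    (by fun_prop : Measurable fun q : ℝ × ℝ => q.2 ^ β * (q.2 - q.1) ^ γ).aestronglyMeasurable

theorem intervalIntegrable_rpow_mul_volterraFactor {a s : ℝ} (hγ : -1 < γ) (ha : -1 < a)
    (haβγ : -2 < a + β + γ) (hs : 0 ≤ s) :
    IntervalIntegrable (fun r => r ^ a * volterraFactor β γ s r) volume 0 s := by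
  obtain ⟨p, hp, hpa⟩ : ∃ p, max 0 (-(β + γ + 1)) < p ∧ p < a + 1 :=
    exists_between (max_lt (by linarith) (by linarith))
  obtain ⟨hp0, hpβγ⟩ := max_lt_iff.1 hp
  obtain ⟨C, hC⟩ := exists_volterraFactor_le_rpow_neg hγ hp0.le (by linarith : -1 < β + γ + p) s
  have hdom : IntervalIntegrable (fun r => C * r ^ (a - p)) volume 0 s :=
    (intervalIntegrable_rpow' (by linarith)).const_mul C
  refine hdom.mono_fun' ?_ ?_ <;> rw [uIoc_of_le hs]
  · exact (by fun_prop : Measurable fun r : ℝ => r ^ a).aestronglyMeasurable.mul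
      (aestronglyMeasurable_volterraFactor le_rfl)
  · refine ae_restrict_of_forall_mem measurableSet_Ioc fun r hr => ?_
    have hpow : 0 ≤ r ^ a := Real.rpow_nonneg hr.1.le a
    calc ‖r ^ a * volterraFactor β γ s r‖ = r ^ a * volterraFactor β γ s r :=
          Real.norm_of_nonneg (mul_nonneg hpow (volterraFactor_nonneg hr.1.le hr.2))
      _ ≤ r ^ a * (C * r ^ (-p)) := mul_le_mul_of_nonneg_left (hC r hr) hpow
      _ = C * r ^ (a - p) := by rw [sub_eq_add_neg, Real.rpow_add hr.1, mul_left_comm]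

theorem intervalIntegrable_rpow_mul_volterraFactor_mul_volterraFactor {a s T : ℝ} (hγ : -1 < γ)
    (ha : -1 < a) (haβγ : -3 < a + 2 * (β + γ)) (hs : 0 ≤ s) (hsT : s ≤ T) :
    IntervalIntegrable (fun r => r ^ a * volterraFactor β γ s r * volterraFactor β γ T r)
      volume 0 s := by
  obtain ⟨p, hp, hpa⟩ : ∃ p, max 0 (-(β + γ + 1)) < p ∧ p < (a + 1) / 2 :=
    exists_between (max_lt (by linarith) (by linarith))
  obtain ⟨hp0, hpβγ⟩ := max_lt_iff.1 hp
  have hpβγ' : -1 < β + γ + p := by linarith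
  obtain ⟨C, hC⟩ := exists_volterraFactor_le_rpow_neg hγ hp0.le hpβγ' s
  obtain ⟨D, hD⟩ := exists_volterraFactor_le_rpow_neg hγ hp0.le hpβγ' T
  have hdom : IntervalIntegrable (fun r => C * D * r ^ (a - p - p)) volume 0 s :=
    (intervalIntegrable_rpow' (by linarith)).const_mul _
  refine hdom.mono_fun' ?_ ?_ <;> rw [uIoc_of_le hs]
  · exact ((by fun_prop : Measurable fun r : ℝ => r ^ a).aestronglyMeasurable.mul
      (aestronglyMeasurable_volterraFactor le_rfl)).mul (aestronglyMeasurable_volterraFactor hsT)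
  · refine ae_restrict_of_forall_mem measurableSet_Ioc fun r hr => ?_
    have hpow : 0 ≤ r ^ a := Real.rpow_nonneg hr.1.le a
    have hIs : 0 ≤ volterraFactor β γ s r := volterraFactor_nonneg hr.1.le hr.2
    have hIT : 0 ≤ volterraFactor β γ T r := volterraFactor_nonneg hr.1.le (hr.2.trans hsT)
    have hCs := hC r hr
    have hDT := hD r ⟨hr.1, hr.2.trans hsT⟩
    calc ‖r ^ a * volterraFactor β γ s r * volterraFactor β γ T r‖
        = r ^ a * volterraFactor β γ s r * volterraFactor β γ T r :=
          Real.norm_of_nonneg (by positivity)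
      _ ≤ r ^ a * (C * r ^ (-p)) * (D * r ^ (-p)) := by
          gcongr
          exact mul_nonneg hpow (hIs.trans hCs)
      _ = C * D * r ^ (a - p - p) := by
          rw [sub_eq_add_neg, sub_eq_add_neg, Real.rpow_add hr.1, Real.rpow_add hr.1]
          ring

end VolterraFactor

section GeneralWeight

variable {β γ s T : ℝ} {w : ℝ → ℝ}

theorem integrableOn_trapezoid_mul_rpow_mul_sub_rpow (hγ : -1 < γ) (hs : 0 ≤ s) (hsT : s ≤ T)
    (hw : IntervalIntegrable w volume 0 s)
    (hwT : IntervalIntegrable (fun r => w r * volterraFactor β γ T r) volume 0 s) :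
    IntegrableOn (fun r t => w r * (t ^ β * (t - r) ^ γ)).uncurry (trapezoid 0 s T) := by
  refine integrableOn_trapezoid_of_intervalIntegrable_integral_norm hs hsT ?_
    (fun r hr => (intervalIntegrable_rpow_mul_sub_rpow hγ hr.1 (hr.2.trans hsT)).const_mul (w r))
    (hwT.norm.congr ?_)
  · rw [intervalIntegrable_iff_integrableOn_Ioc_of_le hs] at hw
    exact hw.aestronglyMeasurable.comp_fst.mul
      (by fun_prop : Measurable fun q : ℝ × ℝ => q.2 ^ β * (q.2 - q.1) ^ γ).aestronglyMeasurable
  · rw [uIoc_of_le hs]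
    intro r hr
    have hkernel : EqOn (fun t => ‖t ^ β * (t - r) ^ γ‖) (fun t => t ^ β * (t - r) ^ γ)
        (uIcc r T) := by
      intro t ht
      rw [uIcc_of_le (hr.2.trans hsT)] at ht
      exact Real.norm_of_nonneg (mul_nonneg (Real.rpow_nonneg (hr.1.le.trans ht.1) _)
        (Real.rpow_nonneg (sub_nonneg.2 ht.1) _))
    simp only [norm_mul (w r), intervalIntegral.integral_const_mul, integral_congr hkernel,
      Real.norm_of_nonneg (volterraFactor_nonneg hr.1.le (hr.2.trans hsT))]
    rfl

theorem integral_rpow_mul_volterraFactor {a : ℝ} (ha : -1 < a) (hγ : -1 < γ)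
    (haβγ : -2 < a + β + γ) (hs : 0 ≤ s) :
    ∫ r in 0..s, r ^ a * volterraFactor β γ s r =
      ProbabilityTheory.beta (a + 1) (γ + 1) * (s ^ (a + β + γ + 2) / (a + β + γ + 2)) := by
  calc ∫ r in 0..s, r ^ a * volterraFactor β γ s r
      = ∫ r in 0..s, ∫ u in r..s, r ^ a * (u ^ β * (u - r) ^ γ) := by
        simp only [intervalIntegral.integral_const_mul]
        rfl
    _ = ∫ u in 0..s, ∫ r in 0..min s u, r ^ a * (u ^ β * (u - r) ^ γ) :=
        integral_integral_swap_of_integrableOn_trapezoid hs le_rfl <|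
          integrableOn_trapezoid_mul_rpow_mul_sub_rpow hγ hs le_rfl (intervalIntegrable_rpow' ha)
            (intervalIntegrable_rpow_mul_volterraFactor hγ ha haβγ hs)
    _ = ∫ u in 0..s, ProbabilityTheory.beta (a + 1) (γ + 1) * u ^ (a + β + γ + 1) := by
        refine integral_congr_Ioo_of_le hs fun u hu => ?_
        simp only [min_eq_right hu.2.le, mul_left_comm _ (u ^ β),
          intervalIntegral.integral_const_mul]
        rw [integral_rpow_mul_sub_rpow ha hγ hu.1, ← mul_assoc, ← Real.rpow_add hu.1, mul_comm]
        ring_nf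
    _ = ProbabilityTheory.beta (a + 1) (γ + 1) * (s ^ (a + β + γ + 2) / (a + β + γ + 2)) := by
        rw [intervalIntegral.integral_const_mul, integral_rpow (.inl (by linarith)),
          Real.zero_rpow (by linarith), sub_zero]
        ring_nf

/-- The density `∂/∂t E[X_s X_t]` of the covariance, which for the Volterra process `X` is obtained
with the weight `w r = r ^ (2 * α) * volterraFactor β γ s r`. The upper limit `min s t` accounts
for the kernel of `X_t` vanishing after time `t`. -/
noncomputable def covarianceDensity (w : ℝ → ℝ) (β γ s t : ℝ) : ℝ :=
  ∫ r in 0..min s t, w r * (t ^ β * (t - r) ^ γ)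

theorem integral_continuous_mul_covarianceDensity {f : ℝ → ℝ} (hf : Continuous f) (hγ : -1 < γ)
    (hs : 0 ≤ s) (hsT : s ≤ T) (hw : IntervalIntegrable w volume 0 s)
    (hwT : IntervalIntegrable (fun r => w r * volterraFactor β γ T r) volume 0 s) :
    ∫ r in 0..s, w r * ∫ t in r..T, f t * (t ^ β * (t - r) ^ γ) =
      ∫ t in 0..T, f t * covarianceDensity w β γ s t := by
  have hfF : IntegrableOn (fun r t => f t * (w r * (t ^ β * (t - r) ^ γ))).uncurry
      (trapezoid 0 s T) :=
    (integrableOn_trapezoid_mul_rpow_mul_sub_rpow hγ hs hsT hw hwT).continuousOn_mul_of_subset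
      (by fun_prop : Continuous fun q : ℝ × ℝ => f q.2).continuousOn
      (isCompact_Icc.prod isCompact_Icc) measurableSet_trapezoid trapezoid_subset_Icc_prod_Icc
  have hswap := integral_integral_swap_of_integrableOn_trapezoid hs hsT hfF
  simp only [mul_left_comm (f _) (w _), intervalIntegral.integral_const_mul] at hswap
  rw [hswap]
  simp only [mul_left_comm (w _) (f _), intervalIntegral.integral_const_mul, covarianceDensity]

theorem intervalIntegrable_continuous_mul_covarianceDensity {f : ℝ → ℝ} (hf : Continuous f)
    (hγ : -1 < γ) (hs : 0 ≤ s) (hsT : s ≤ T) (hw : IntervalIntegrable w volume 0 s)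
    (hwT : IntervalIntegrable (fun r => w r * volterraFactor β γ T r) volume 0 s) :
    IntervalIntegrable (fun t => f t * covarianceDensity w β γ s t) volume 0 T :=
  (intervalIntegrable_integral_of_integrableOn_trapezoid hs hsT
    (integrableOn_trapezoid_mul_rpow_mul_sub_rpow hγ hs hsT hw hwT)).continuousOn_mul
      hf.continuousOn

theorem tendsto_rpow_neg_mul_covarianceDensity (hs : 0 ≤ s) (hw : IntervalIntegrable w volume 0 s) :
    Tendsto (fun t => t ^ (-(β + γ)) * covarianceDensity w β γ s t) atTop
      (𝓝 (∫ r in 0..s, w r)) := by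
  have hlim := tendsto_integral_mul_comp_div (h := fun x => (1 - x) ^ γ) hw (by fun_prop)
    ((continuousAt_const.sub continuousAt_id).rpow_const (.inl (by simp)))
  simp only [sub_zero, Real.one_rpow, mul_one] at hlim
  refine hlim.congr' ?_
  filter_upwards [eventually_gt_atTop s] with t hst
  have ht : 0 < t := hs.trans_lt hst
  rw [covarianceDensity, min_eq_left hst.le, ← intervalIntegral.integral_const_mul]
  refine integral_congr fun r hr => ?_
  rw [uIcc_of_le hs] at hr
  have hrt : 0 ≤ 1 - r / t := sub_nonneg.2 ((div_le_one ht).2 (hr.2.trans hst.le))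
  have hfactor : t - r = t * (1 - r / t) := by field_simp
  have hpow : t ^ (-(β + γ)) * (t ^ β * t ^ γ) = 1 := by
    rw [← Real.rpow_add ht, ← Real.rpow_add ht, neg_add_cancel, Real.rpow_zero]
  rw [hfactor, Real.mul_rpow ht.le hrt]
  linear_combination (-(w r * (1 - r / t) ^ γ)) * hpow

theorem tendsto_rpow_neg_mul_exp_neg_mul_integral_weight {θ : ℝ} (hγ : -1 < γ) (hθ : 0 < θ)
    (hs : 0 ≤ s) (hw : IntervalIntegrable w volume 0 s)
    (hwT : ∀ T, s ≤ T → IntervalIntegrable (fun r => w r * volterraFactor β γ T r) volume 0 s) :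
    Tendsto (fun T => T ^ (-(β + γ)) * (Real.exp (-(θ * T)) *
        ∫ r in 0..s, w r * ∫ t in r..T, Real.exp (θ * t) * (t ^ β * (t - r) ^ γ)))
      atTop (𝓝 ((∫ r in 0..s, w r) / θ)) := by
  have hexp : Continuous fun t => Real.exp (θ * t) := by fun_prop
  refine (tendsto_rpow_neg_mul_exp_neg_mul_integral_exp_mul (a := 0) hθ ?_
    (tendsto_rpow_neg_mul_covarianceDensity (β := β) (γ := γ) hs hw)).congr' ?_
  · filter_upwards [eventually_ge_atTop s] with T hT
    exact intervalIntegrable_continuous_mul_covarianceDensity hexp hγ hs hT hw (hwT T hT)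
  · filter_upwards [eventually_ge_atTop s] with T hT
    rw [integral_continuous_mul_covarianceDensity hexp hγ hs hT hw (hwT T hT)]

end GeneralWeight

/-- Lemma 4.6: asymptotics of `E(X_s · e^{-θT} ∫₀ᵀ e^{θr} dX_r)` for fixed `s > 0`. -/
theorem stmt_18 (α β γ θ s : ℝ) (hα : -(1/2 : ℝ) < α) (hγ : -1 < γ)
    (hαβγ : -(3/2 : ℝ) < α + β + γ) (hθ : 0 < θ) (hs : 0 < s)
    (K : ℝ → ℝ)
    (hK : ∀ T : ℝ, s < T → K T = Real.exp (-(θ * T)) * ∫ r in (0:ℝ)..s,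
      r ^ (2*α) * (∫ u in r..s, u ^ β * (u - r) ^ γ) *
      (∫ t in r..T, Real.exp (θ * t) * t ^ β * (t - r) ^ γ)) :
    Tendsto (fun T : ℝ => T ^ (-(β + γ)) * K T) atTop
      (nhds ((Real.Gamma (2*α+1) * Real.Gamma (γ+1) / Real.Gamma (2*α+γ+2))
        * s ^ (2*α+β+γ+2) / (θ * (2*α+β+γ+2)))) := by
  have hlim := tendsto_rpow_neg_mul_exp_neg_mul_integral_weight hγ hθ hs.le
    (intervalIntegrable_rpow_mul_volterraFactor (a := 2 * α) (β := β) hγ (by linarith)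
      (by linarith) hs.le)
    fun T hT => intervalIntegrable_rpow_mul_volterraFactor_mul_volterraFactor hγ (by linarith)
      (by linarith) hs.le hT
  rw [integral_rpow_mul_volterraFactor (by linarith) hγ (by linarith) hs.le,
    ProbabilityTheory.beta, ← mul_div_assoc, div_div, mul_comm _ θ,
    show 2 * α + 1 + (γ + 1) = 2 * α + γ + 2 by ring] at hlim
  refine hlim.congr' ?_
  filter_upwards [eventually_gt_atTop s] with T hT
  simp only [hK T hT, volterraFactor, mul_assoc]
end

section
/- Let α, β, γ be real numbers with α > -1/2, γ > -1, α + β + γ > -3/2, and let θ > 0. Then (1/θ²) ∫₀^∞ s^{2α} (∫ₛ^∞ e^{−θt} t^β (t−s)^γ dt)² ds = (2 Γ(2α+2β+2γ+3) / θ^{2α+2β+2γ+5}) · ∫₀¹ ∫₀¹ z^{2α} (1−zx)^γ x^{2α+β+γ+1} (1−z)^γ (1+x)^{−(2α+2β+2γ+3)} dz dx, and both sides are finite. -/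
open MeasureTheory Filter

/-!
The kernel `K t s = s ^ α * t ^ β * (t - s) ^ γ` is homogeneous of degree `δ = α + β + γ`. By
symmetry in `t` and `u`, the second moment is twice the integral of
`exp (-(θ * (t + u))) * K t s * K u s` over `0 < s < u < t`. In the scale-free coordinates
`u = t * x`, `s = t * x * z` homogeneity turns the integrand into a function of `(x, z)` times
`t ^ (2 * δ + 2) * exp (-(θ * (1 + x) * t))`, and the integral over `t` is a Gamma integral.
Carrying this out for integrals valued in `ℝ≥0∞` shows that one side is finite if the other is; on
the unit square the density is dominated by a product of two Beta integrands.
-/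

open Set Function
open scoped ENNReal

section Sections

variable {X Y : Type*} [MeasurableSpace X] [MeasurableSpace Y] {μ : Measure X} {ν : Measure Y}

lemma measurable_setLIntegral_section [SFinite ν] {f : X → Y → ℝ≥0∞} {S : X → Set Y}
    (hf : Measurable (uncurry f)) (hS : MeasurableSet {p : X × Y | p.2 ∈ S p.1}) :
    Measurable fun x => ∫⁻ y in S x, f x y ∂ν := by
  have hsection : ∀ x, MeasurableSet (S x) := fun x => measurable_prodMk_left hS
  simp_rw [← lintegral_indicator (hsection _)]
  exact (hf.indicator hS).lintegral_prod_right'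

lemma setLIntegral_setLIntegral_eq_lintegral_indicator {A : Set X} {S : X → Set Y}
    {f : X → Y → ℝ≥0∞} (hA : MeasurableSet A) (hS : ∀ x ∈ A, MeasurableSet (S x)) :
    ∫⁻ x in A, ∫⁻ y in S x, f x y ∂ν ∂μ =
      ∫⁻ x, ∫⁻ y, {p : X × Y | p.1 ∈ A ∧ p.2 ∈ S p.1}.indicator (uncurry f) (x, y) ∂ν ∂μ := by
  classical
  rw [← lintegral_indicator hA]
  refine lintegral_congr fun x => ?_
  by_cases hx : x ∈ A
  · rw [indicator_of_mem hx, ← lintegral_indicator (hS x hx)]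
    simp [indicator_apply, hx]
  · simp [hx]

-- The analogue of `Finset.sum_comm'`.
lemma setLIntegral_setLIntegral_comm' [SFinite μ] [SFinite ν] {A : Set X} {S : X → Set Y}
    {B : Set Y} {T : Y → Set X} {f : X → Y → ℝ≥0∞} (hf : Measurable (uncurry f))
    (hA : MeasurableSet A) (hB : MeasurableSet B)
    (hAS : MeasurableSet {p : X × Y | p.1 ∈ A ∧ p.2 ∈ S p.1})
    (h : ∀ x y, x ∈ A ∧ y ∈ S x ↔ y ∈ B ∧ x ∈ T y) :
    ∫⁻ x in A, ∫⁻ y in S x, f x y ∂ν ∂μ = ∫⁻ y in B, ∫⁻ x in T y, f x y ∂μ ∂ν := by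
  classical
  have hS : ∀ x ∈ A, MeasurableSet (S x) := fun x hx => by
    simpa only [preimage_ofPred_eq, hx, true_and, ofPred_mem_eq] using
      measurable_prodMk_left (x := x) hAS
  have hT : ∀ y ∈ B, MeasurableSet (T y) := fun y hy => by
    simpa only [preimage_ofPred_eq, h, hy, true_and, ofPred_mem_eq] using
      measurable_prodMk_right (y := y) hAS
  rw [setLIntegral_setLIntegral_eq_lintegral_indicator hA hS,
    setLIntegral_setLIntegral_eq_lintegral_indicator hB hT,
    lintegral_lintegral_swap (by exact (hf.indicator hAS).aemeasurable)]
  simp [indicator_apply, h]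

end Sections

section LinearOrder

variable {X : Type*} [LinearOrder X] [TopologicalSpace X] [OrderClosedTopology X]
  [SecondCountableTopology X] [MeasurableSpace X] [OpensMeasurableSpace X]
  {μ : Measure X} [SFinite μ] [NullSingletonClass μ]

lemma sq_lintegral_eq_two_mul_lintegral_Iio {g : X → ℝ≥0∞} (hg : Measurable g) :
    (∫⁻ t, g t ∂μ) ^ 2 = 2 * ∫⁻ t, ∫⁻ u in Iio t, g t * g u ∂μ ∂μ := by
  have hgg : Measurable (uncurry fun t u => g t * g u) := by unfold uncurry; fun_prop
  have hlower : MeasurableSet {p : X × X | p.2 < p.1} :=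
    measurableSet_lt measurable_snd measurable_fst
  have hupper : ∫⁻ t, ∫⁻ u in Ioi t, g t * g u ∂μ ∂μ = ∫⁻ t, ∫⁻ u in Iio t, g t * g u ∂μ ∂μ := by
    simpa [mul_comm] using setLIntegral_setLIntegral_comm' (μ := μ) (ν := μ) (A := univ)
      (S := Ioi) (B := univ) (T := Iio) hgg .univ .univ
      (by simpa using measurableSet_lt measurable_fst measurable_snd) (by simp)
  calc (∫⁻ t, g t ∂μ) ^ 2 = ∫⁻ t, ∫⁻ u, g t * g u ∂μ ∂μ := by
        simp_rw [lintegral_const_mul _ hg]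
        rw [lintegral_mul_const _ hg, sq]
    _ = ∫⁻ t, (∫⁻ u in Iio t, g t * g u ∂μ + ∫⁻ u in Ioi t, g t * g u ∂μ) ∂μ := by
        refine lintegral_congr fun t => ?_
        rw [setLIntegral_congr Ioi_ae_eq_Ici, ← compl_Iio, lintegral_add_compl _ measurableSet_Iio]
    _ = 2 * ∫⁻ t, ∫⁻ u in Iio t, g t * g u ∂μ ∂μ := by
        rw [lintegral_add_left (measurable_setLIntegral_section hgg hlower), hupper, two_mul]

lemma lintegral_sq_lintegral_Ioi {h : X → X → ℝ≥0∞} (hh : Measurable (uncurry h)) (a : X) :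
    ∫⁻ s in Ioi a, (∫⁻ t in Ioi s, h t s ∂μ) ^ 2 ∂μ =
      2 * ∫⁻ t in Ioi a, ∫⁻ u in Ioo a t, ∫⁻ s in Ioo a u, h t s * h u s ∂μ ∂μ ∂μ := by
  have hhm : Measurable fun p : X × X => h p.1 p.2 := hh
  have hsq : ∀ s, (∫⁻ t in Ioi s, h t s ∂μ) ^ 2 =
      2 * ∫⁻ t in Ioi s, ∫⁻ u in Ioo s t, h t s * h u s ∂μ ∂μ := fun s => by
    rw [sq_lintegral_eq_two_mul_lintegral_Iio (by fun_prop)]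
    simp_rw [Measure.restrict_restrict measurableSet_Iio, Iio_inter_Ioi]
  have hst : Measurable (uncurry fun s t => ∫⁻ u in Ioo s t, h t s * h u s ∂μ) := by
    refine measurable_setLIntegral_section (f := fun (p : X × X) u => h p.2 p.1 * h u p.1)
      (S := fun p => Ioo p.1 p.2) (by unfold uncurry; fun_prop) ?_
    exact (measurableSet_lt (by fun_prop) (by fun_prop)).inter
      (measurableSet_lt (by fun_prop) (by fun_prop))
  simp_rw [hsq]
  rw [lintegral_const_mul' _ _ (by simp)]
  congr 1
  calc ∫⁻ s in Ioi a, ∫⁻ t in Ioi s, ∫⁻ u in Ioo s t, h t s * h u s ∂μ ∂μ ∂μ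
      = ∫⁻ t in Ioi a, ∫⁻ s in Ioo a t, ∫⁻ u in Ioo s t, h t s * h u s ∂μ ∂μ ∂μ := by
        refine setLIntegral_setLIntegral_comm' hst measurableSet_Ioi measurableSet_Ioi
          ((measurableSet_lt (by fun_prop) (by fun_prop)).inter
            (measurableSet_lt (by fun_prop) (by fun_prop))) fun s t => ?_
        exact ⟨fun ⟨has, hst⟩ => ⟨has.trans hst, has, hst⟩, fun ⟨_, has, hst⟩ => ⟨has, hst⟩⟩
    _ = ∫⁻ t in Ioi a, ∫⁻ u in Ioo a t, ∫⁻ s in Ioo a u, h t s * h u s ∂μ ∂μ ∂μ := by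
        refine lintegral_congr fun t => setLIntegral_setLIntegral_comm'
          (by unfold uncurry; fun_prop) measurableSet_Ioo measurableSet_Ioo
          ((measurableSet_Ioo.preimage measurable_fst).inter
            ((measurableSet_lt (by fun_prop) (by fun_prop)).inter
              (measurableSet_lt (by fun_prop) (by fun_prop)))) fun s u => ?_
        exact ⟨fun ⟨⟨has, _⟩, hsu, hut⟩ => ⟨⟨has.trans hsu, hut⟩, has, hsu⟩,
          fun ⟨⟨_, hut⟩, has, hsu⟩ => ⟨⟨has, hsu.trans hut⟩, hsu, hut⟩⟩

end LinearOrder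

section UnitSquare

/-- The open unit square, which parametrises the ratios `(u / t, s / u)` of `0 < s < u < t`. -/
abbrev unitSquare : Set (ℝ × ℝ) := Ioo 0 1 ×ˢ Ioo 0 1

lemma measurableSet_unitSquare : MeasurableSet unitSquare :=
  measurableSet_Ioo.prod measurableSet_Ioo

lemma setLIntegral_Ioo_zero_eq_mul {t : ℝ} (ht : 0 < t) (g : ℝ → ℝ≥0∞) :
    ∫⁻ u in Ioo 0 t, g u = ENNReal.ofReal t * ∫⁻ x in Ioo 0 1, g (t * x) := by
  have himage : (t * ·) '' Ioo 0 1 = Ioo 0 t := by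
    simpa using image_mul_left_Ioo ht 0 1
  have hderiv : ∀ x ∈ Ioo (0 : ℝ) 1, HasDerivWithinAt (t * ·) t (Ioo 0 1) x :=
    fun x _ => (hasDerivAt_const_mul t).hasDerivWithinAt
  rw [← himage, lintegral_image_eq_lintegral_abs_deriv_mul measurableSet_Ioo hderiv
    (mul_right_injective₀ ht.ne').injOn, abs_of_pos ht,
    lintegral_const_mul' _ _ ENNReal.ofReal_ne_top]

lemma setLIntegral_triangle_eq_setLIntegral_unitSquare {t : ℝ} (ht : 0 < t)
    {f : ℝ → ℝ → ℝ≥0∞} (hf : Measurable (uncurry f)) :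
    ∫⁻ u in Ioo 0 t, ∫⁻ s in Ioo 0 u, f u s =
      ∫⁻ p in unitSquare, ENNReal.ofReal (t ^ 2 * p.1) * f (t * p.1) (t * p.1 * p.2) := by
  have hfm : Measurable fun p : ℝ × ℝ => f p.1 p.2 := hf
  rw [setLIntegral_Ioo_zero_eq_mul ht, Measure.volume_eq_prod, ← Measure.prod_restrict,
    lintegral_prod _ (by fun_prop), ← lintegral_const_mul' _ _ ENNReal.ofReal_ne_top]
  refine setLIntegral_congr_fun measurableSet_Ioo fun x hx => ?_
  simp only [setLIntegral_Ioo_zero_eq_mul (mul_pos ht hx.1)]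
  rw [lintegral_const_mul' _ _ ENNReal.ofReal_ne_top, ← mul_assoc, ← ENNReal.ofReal_mul ht.le,
    ← mul_assoc, ← sq]

end UnitSquare

section HomogeneousKernel

/-- A nonnegative measurable Volterra kernel `K t s`, homogeneous of degree `δ`. Nonnegativity and
homogeneity are required only on `0 < s < t`. -/
structure IsHomogeneousKernel (K : ℝ → ℝ → ℝ) (δ : ℝ) : Prop where
  measurable : Measurable (uncurry K)
  nonneg : ∀ {t s : ℝ}, 0 < s → s < t → 0 ≤ K t s
  map_mul : ∀ {c t s : ℝ}, 0 < c → 0 < s → s < t → K (c * t) (c * s) = c ^ δ * K t s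

/-- The density on the unit square obtained from `exp (-(θ * (t + u))) * K t s * K u s` by setting
`u = t * x`, `s = t * x * z` and integrating out the scale `t`, up to the factor
`Γ (2 * δ + 3) / θ ^ (2 * δ + 3)`. -/
noncomputable def similarityDensity (K : ℝ → ℝ → ℝ) (δ : ℝ) (p : ℝ × ℝ) : ℝ :=
  K 1 (p.1 * p.2) * K 1 p.2 * p.1 ^ (δ + 1) * (1 + p.1) ^ (-(2 * δ + 3))

lemma lintegral_rpow_mul_exp_neg_mul_Ioi {a r : ℝ} (ha : 0 < a) (hr : 0 < r) :
    ∫⁻ t in Ioi 0, ENNReal.ofReal (t ^ (a - 1) * Real.exp (-(r * t))) =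
      ENNReal.ofReal (Real.Gamma a / r ^ a) := by
  have hintegral : ∫ t in Ioi 0, t ^ (a - 1) * Real.exp (-(r * t)) = Real.Gamma a / r ^ a := by
    rw [Real.integral_rpow_mul_exp_neg_mul_Ioi ha hr, Real.div_rpow zero_le_one hr.le,
      Real.one_rpow, one_div_mul_eq_div]
  have hΓ : 0 < Real.Gamma a / r ^ a := div_pos (Real.Gamma_pos_of_pos ha) (by positivity)
  rw [← hintegral, ofReal_integral_eq_lintegral_ofReal
    (Integrable.of_integral_ne_zero (hintegral ▸ hΓ.ne'))]
  filter_upwards [ae_restrict_mem measurableSet_Ioi] with t (ht : 0 < t)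
  exact (by positivity : 0 ≤ t ^ (a - 1) * Real.exp (-(r * t)))

namespace IsHomogeneousKernel

variable {K : ℝ → ℝ → ℝ} {δ θ : ℝ}

lemma similarityDensity_nonneg (hK : IsHomogeneousKernel K δ) {p : ℝ × ℝ} (hp : p ∈ unitSquare) :
    0 ≤ similarityDensity K δ p := by
  obtain ⟨⟨hx0, hx1⟩, hz0, hz1⟩ := hp
  have hxz : p.1 * p.2 < 1 := by nlinarith
  have h1 := hK.nonneg (mul_pos hx0 hz0) hxz
  have h2 := hK.nonneg hz0 hz1
  unfold similarityDensity
  positivity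

lemma exp_mul_kernel_mul_exp_mul_kernel_scaled (hK : IsHomogeneousKernel K δ) {t : ℝ} (ht : 0 < t)
    {p : ℝ × ℝ} (hp : p ∈ unitSquare) :
    t ^ 2 * p.1 * (Real.exp (-(θ * t)) * K t (t * p.1 * p.2) *
        (Real.exp (-(θ * (t * p.1))) * K (t * p.1) (t * p.1 * p.2))) =
      similarityDensity K δ p * (1 + p.1) ^ (2 * δ + 3) *
        (t ^ (2 * δ + 3 - 1) * Real.exp (-(θ * (1 + p.1) * t))) := by
  obtain ⟨⟨hx0, hx1⟩, hz0, hz1⟩ := hp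
  have houter : K t (t * p.1 * p.2) = t ^ δ * K 1 (p.1 * p.2) := by
    simpa [mul_assoc] using hK.map_mul ht (mul_pos hx0 hz0) (show p.1 * p.2 < 1 by nlinarith)
  have hinner : K (t * p.1) (t * p.1 * p.2) = t ^ δ * p.1 ^ δ * K 1 p.2 := by
    simpa [Real.mul_rpow ht.le hx0.le] using hK.map_mul (mul_pos ht hx0) hz0 hz1
  have hpow : t ^ (2 * δ + 3 - 1) = t ^ δ * t ^ δ * t ^ 2 := by
    rw [← Real.rpow_natCast t 2, ← Real.rpow_add ht, ← Real.rpow_add ht]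
    push_cast
    ring_nf
  have hexp : Real.exp (-(θ * (1 + p.1) * t)) =
      Real.exp (-(θ * t)) * Real.exp (-(θ * (t * p.1))) := by
    rw [← Real.exp_add]
    ring_nf
  rw [houter, hinner, hpow, hexp, similarityDensity, Real.rpow_add_one hx0.ne',
    Real.rpow_neg (by positivity)]
  field_simp

lemma lintegral_scale_eq_similarityDensity (hK : IsHomogeneousKernel K δ) (hδ : -(3 / 2) < δ)
    (hθ : 0 < θ) {p : ℝ × ℝ} (hp : p ∈ unitSquare) :
    ∫⁻ t in Ioi 0, ENNReal.ofReal (t ^ 2 * p.1) *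
        (ENNReal.ofReal (Real.exp (-(θ * t)) * K t (t * p.1 * p.2)) *
          ENNReal.ofReal (Real.exp (-(θ * (t * p.1))) * K (t * p.1) (t * p.1 * p.2))) =
      ENNReal.ofReal (Real.Gamma (2 * δ + 3) / θ ^ (2 * δ + 3)) *
        ENNReal.ofReal (similarityDensity K δ p) := by
  have ha : 0 < 2 * δ + 3 := by linarith
  obtain ⟨⟨hx0, hx1⟩, hz0, hz1⟩ := id hp
  have hr : 0 < 1 + p.1 := by linarith
  have hρ : 0 ≤ similarityDensity K δ p * (1 + p.1) ^ (2 * δ + 3) :=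
    mul_nonneg (hK.similarityDensity_nonneg hp) (by positivity)
  calc _ = ∫⁻ t in Ioi 0, ENNReal.ofReal (similarityDensity K δ p * (1 + p.1) ^ (2 * δ + 3)) *
        ENNReal.ofReal (t ^ (2 * δ + 3 - 1) * Real.exp (-(θ * (1 + p.1) * t))) := by
        refine setLIntegral_congr_fun measurableSet_Ioi fun t (ht : 0 < t) => ?_
        have hst : t * p.1 * p.2 < t := by
          rw [mul_assoc]
          exact mul_lt_of_lt_one_right ht (by nlinarith)
        have hKt : 0 ≤ K t (t * p.1 * p.2) := hK.nonneg (by positivity) hst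
        rw [← ENNReal.ofReal_mul (by positivity), ← ENNReal.ofReal_mul (by positivity),
          ← ENNReal.ofReal_mul hρ, hK.exp_mul_kernel_mul_exp_mul_kernel_scaled ht hp]
    _ = ENNReal.ofReal (similarityDensity K δ p * (1 + p.1) ^ (2 * δ + 3) *
          (Real.Gamma (2 * δ + 3) / (θ * (1 + p.1)) ^ (2 * δ + 3))) := by
        rw [lintegral_const_mul' _ _ ENNReal.ofReal_ne_top,
          lintegral_rpow_mul_exp_neg_mul_Ioi ha (mul_pos hθ hr), ENNReal.ofReal_mul hρ]
    _ = _ := by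
        rw [← ENNReal.ofReal_mul (div_pos (Real.Gamma_pos_of_pos ha) (by positivity)).le,
          Real.mul_rpow hθ.le hr.le]
        congr 1
        field_simp

lemma lintegral_sq_lintegral_exp_neg_mul (hK : IsHomogeneousKernel K δ) (hδ : -(3 / 2) < δ)
    (hθ : 0 < θ) :
    ∫⁻ s in Ioi 0, (∫⁻ t in Ioi s, ENNReal.ofReal (Real.exp (-(θ * t)) * K t s)) ^ 2 =
      2 * (ENNReal.ofReal (Real.Gamma (2 * δ + 3) / θ ^ (2 * δ + 3)) *
        ∫⁻ p in unitSquare, ENNReal.ofReal (similarityDensity K δ p)) := by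
  have hKm : Measurable fun p : ℝ × ℝ => K p.1 p.2 := hK.measurable
  rw [lintegral_sq_lintegral_Ioi
    (h := fun t s => ENNReal.ofReal (Real.exp (-(θ * t)) * K t s)) (by unfold uncurry; fun_prop)]
  congr 1
  rw [setLIntegral_congr_fun measurableSet_Ioi fun t ht =>
      setLIntegral_triangle_eq_setLIntegral_unitSquare ht (by unfold uncurry; fun_prop),
    lintegral_lintegral_swap (by unfold uncurry; fun_prop),
    setLIntegral_congr_fun measurableSet_unitSquare fun p hp =>
      hK.lintegral_scale_eq_similarityDensity hδ hθ hp,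
    lintegral_const_mul' _ _ ENNReal.ofReal_ne_top]

lemma measurable_lintegral_exp_neg_mul (hK : IsHomogeneousKernel K δ) :
    Measurable fun s => ∫⁻ t in Ioi s, ENNReal.ofReal (Real.exp (-(θ * t)) * K t s) := by
  have hKm : Measurable fun p : ℝ × ℝ => K p.1 p.2 := hK.measurable
  exact measurable_setLIntegral_section (by unfold uncurry; fun_prop)
    (measurableSet_lt measurable_fst measurable_snd)

lemma sq_integral_exp_neg_mul_eq_toReal (hK : IsHomogeneousKernel K δ) {s : ℝ} (hs : 0 < s) :
    (∫ t in Ioi s, Real.exp (-(θ * t)) * K t s) ^ 2 =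
      ((∫⁻ t in Ioi s, ENNReal.ofReal (Real.exp (-(θ * t)) * K t s)) ^ 2).toReal := by
  have hKm : Measurable fun p : ℝ × ℝ => K p.1 p.2 := hK.measurable
  rw [integral_eq_lintegral_of_nonneg_ae ?_ (by fun_prop), ENNReal.toReal_pow]
  filter_upwards [ae_restrict_mem measurableSet_Ioi] with t ht
  exact mul_nonneg (Real.exp_pos _).le (hK.nonneg hs ht)

lemma lintegral_sq_lintegral_exp_neg_mul_eq_ofReal (hK : IsHomogeneousKernel K δ)
    (hδ : -(3 / 2) < δ) (hθ : 0 < θ) (hint : IntegrableOn (similarityDensity K δ) unitSquare) :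
    ∫⁻ s in Ioi 0, (∫⁻ t in Ioi s, ENNReal.ofReal (Real.exp (-(θ * t)) * K t s)) ^ 2 =
      ENNReal.ofReal (2 * Real.Gamma (2 * δ + 3) / θ ^ (2 * δ + 3) *
        ∫ p in unitSquare, similarityDensity K δ p) := by
  have hΓ : 0 < Real.Gamma (2 * δ + 3) := Real.Gamma_pos_of_pos (by linarith)
  have hnonneg : 0 ≤ᵐ[volume.restrict unitSquare] similarityDensity K δ := by
    filter_upwards [ae_restrict_mem measurableSet_unitSquare] with p hp
    exact hK.similarityDensity_nonneg hp
  rw [hK.lintegral_sq_lintegral_exp_neg_mul hδ hθ,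
    ← ofReal_integral_eq_lintegral_ofReal hint hnonneg, ← ENNReal.ofReal_mul (by positivity),
    mul_div_assoc, mul_assoc, ENNReal.ofReal_mul zero_le_two, ENNReal.ofReal_ofNat]

theorem integrableOn_sq_integral_exp_neg_mul (hK : IsHomogeneousKernel K δ) (hδ : -(3 / 2) < δ)
    (hθ : 0 < θ) (hint : IntegrableOn (similarityDensity K δ) unitSquare) :
    IntegrableOn (fun s => (∫ t in Ioi s, Real.exp (-(θ * t)) * K t s) ^ 2) (Ioi 0) := by
  refine IntegrableOn.congr_fun (integrable_toReal_of_lintegral_ne_top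
    (hK.measurable_lintegral_exp_neg_mul.pow_const 2).aemeasurable ?_)
    (fun s hs => (hK.sq_integral_exp_neg_mul_eq_toReal (θ := θ) hs).symm) measurableSet_Ioi
  simp [hK.lintegral_sq_lintegral_exp_neg_mul_eq_ofReal hδ hθ hint]

theorem integral_sq_integral_exp_neg_mul (hK : IsHomogeneousKernel K δ) (hδ : -(3 / 2) < δ)
    (hθ : 0 < θ) (hint : IntegrableOn (similarityDensity K δ) unitSquare) :
    ∫ s in Ioi 0, (∫ t in Ioi s, Real.exp (-(θ * t)) * K t s) ^ 2 =
      2 * Real.Gamma (2 * δ + 3) / θ ^ (2 * δ + 3) *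
        ∫ p in unitSquare, similarityDensity K δ p := by
  have hlint := hK.lintegral_sq_lintegral_exp_neg_mul_eq_ofReal hδ hθ hint
  have hmeas : Measurable fun s =>
      (∫⁻ t in Ioi s, ENNReal.ofReal (Real.exp (-(θ * t)) * K t s)) ^ 2 :=
    hK.measurable_lintegral_exp_neg_mul.pow_const 2
  have hΓ : 0 < Real.Gamma (2 * δ + 3) := Real.Gamma_pos_of_pos (by linarith)
  have hdensity : 0 ≤ ∫ p in unitSquare, similarityDensity K δ p :=
    setIntegral_nonneg measurableSet_unitSquare fun p hp => hK.similarityDensity_nonneg hp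
  rw [setIntegral_congr_fun measurableSet_Ioi fun s hs => hK.sq_integral_exp_neg_mul_eq_toReal hs,
    integral_toReal hmeas.aemeasurable (ae_lt_top hmeas (hlint ▸ ENNReal.ofReal_ne_top)), hlint,
    ENNReal.toReal_ofReal (by positivity)]

end IsHomogeneousKernel

end HomogeneousKernel

section PowerKernel

/-- The kernel `s ^ α * t ^ β * (t - s) ^ γ`, the product of the weight `s ^ α` and the integrand
defining the Gaussian Volterra process `X`. -/
noncomputable def powerKernel (α β γ t s : ℝ) : ℝ := s ^ α * t ^ β * (t - s) ^ γ

lemma isHomogeneousKernel_powerKernel (α β γ : ℝ) :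
    IsHomogeneousKernel (powerKernel α β γ) (α + β + γ) where
  measurable := by unfold uncurry powerKernel; fun_prop
  nonneg {t s} hs hst := by
    have ht : 0 < t := hs.trans hst
    exact mul_nonneg (by positivity) (Real.rpow_nonneg (sub_pos.2 hst).le _)
  map_mul {c t s} hc hs hst := by
    rw [powerKernel, powerKernel, ← mul_sub, Real.mul_rpow hc.le hs.le,
      Real.mul_rpow hc.le (hs.trans hst).le, Real.mul_rpow hc.le (sub_pos.2 hst).le,
      Real.rpow_add hc, Real.rpow_add hc]
    ring

lemma eqOn_similarityDensity_powerKernel (α β γ : ℝ) :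
    EqOn (similarityDensity (powerKernel α β γ) (α + β + γ))
      (fun p => p.2 ^ (2 * α) * (1 - p.2 * p.1) ^ γ * p.1 ^ (2 * α + β + γ + 1) * (1 - p.2) ^ γ *
        (1 + p.1) ^ (-(2 * α + 2 * β + 2 * γ + 3))) unitSquare := by
  rintro p ⟨⟨hx0, -⟩, hz0, -⟩
  have hx : p.1 ^ (2 * α + β + γ + 1) = p.1 ^ α * p.1 ^ (α + β + γ + 1) := by
    rw [← Real.rpow_add hx0]
    ring_nf
  have hz : p.2 ^ (2 * α) = p.2 ^ α * p.2 ^ α := by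
    rw [← Real.rpow_add hz0]
    ring_nf
  simp only [similarityDensity, powerKernel, Real.mul_rpow hz0.le hx0.le, hx, hz,
    mul_comm p.1 p.2, Real.one_rpow]
  ring_nf

lemma integrableOn_rpow_mul_one_sub_rpow {a b : ℝ} (ha : -1 < a) (hb : -1 < b) :
    IntegrableOn (fun x : ℝ => x ^ a * (1 - x) ^ b) (Ioo 0 1) := by
  have hbeta := Complex.betaIntegral_convergent (u := ((a + 1 : ℝ) : ℂ)) (v := ((b + 1 : ℝ) : ℂ))
    (by rw [Complex.ofReal_re]; linarith) (by rw [Complex.ofReal_re]; linarith)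
  rw [intervalIntegrable_iff_integrableOn_Ioo_of_le zero_le_one] at hbeta
  refine IntegrableOn.congr_fun hbeta.re (fun x ⟨hx0, hx1⟩ => ?_) measurableSet_Ioo
  have hcpow : (x : ℂ) ^ (((a + 1 : ℝ) : ℂ) - 1) * (1 - (x : ℂ)) ^ (((b + 1 : ℝ) : ℂ) - 1) =
      ((x ^ a * (1 - x) ^ b : ℝ) : ℂ) := by
    rw [Complex.ofReal_mul, Complex.ofReal_cpow hx0.le, Complex.ofReal_cpow (sub_pos.2 hx1).le]
    push_cast
    simp
  simp only [hcpow, RCLike.re_to_complex, Complex.ofReal_re]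

lemma one_sub_rpow_mul_one_sub_rpow_le_one_sub_mul {p : ℝ × ℝ} (hp : p ∈ unitSquare) {l : ℝ}
    (hl0 : 0 ≤ l) (hl1 : l ≤ 1) :
    (1 - p.1) ^ l * (1 - p.2) ^ (1 - l) ≤ 1 - p.2 * p.1 := by
  obtain ⟨⟨hx0, hx1⟩, hz0, hz1⟩ := hp
  have hpos : 0 < 1 - p.2 * p.1 := by nlinarith
  calc (1 - p.1) ^ l * (1 - p.2) ^ (1 - l)
      ≤ (1 - p.2 * p.1) ^ l * (1 - p.2 * p.1) ^ (1 - l) := by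
        gcongr <;> nlinarith
    _ = 1 - p.2 * p.1 := by
        rw [← Real.rpow_add hpos, add_sub_cancel, Real.rpow_one]

/- For `-1 < g` both exponents on the right exceed `-1`, although the left side behaves like a power
`2 * γ`, possibly below `-1`, along lines into the corner `(1, 1)`. The choice `l = -g` in the
preceding lemma spreads this singularity over the two variables. -/
lemma one_sub_mul_rpow_mul_one_sub_rpow_le {g γ : ℝ} (hg : -1 ≤ g) (hg0 : g ≤ 0) (hgγ : g ≤ γ)
    {p : ℝ × ℝ} (hp : p ∈ unitSquare) :
    (1 - p.2 * p.1) ^ γ * (1 - p.2) ^ γ ≤ (1 - p.1) ^ (-g ^ 2) * (1 - p.2) ^ (g * (g + 2)) := by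
  have hmean := one_sub_rpow_mul_one_sub_rpow_le_one_sub_mul hp (l := -g) (by linarith)
    (by linarith)
  obtain ⟨⟨hx0, hx1⟩, hz0, hz1⟩ := hp
  have hx : 0 < 1 - p.1 := sub_pos.2 hx1
  have hz : 0 < 1 - p.2 := sub_pos.2 hz1
  have hxz : 0 < 1 - p.2 * p.1 := by nlinarith
  calc (1 - p.2 * p.1) ^ γ * (1 - p.2) ^ γ
      ≤ (1 - p.2 * p.1) ^ g * (1 - p.2) ^ g :=
        mul_le_mul (Real.rpow_le_rpow_of_exponent_ge hxz (by nlinarith) hgγ)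
          (Real.rpow_le_rpow_of_exponent_ge hz (by linarith) hgγ) (by positivity) (by positivity)
    _ ≤ ((1 - p.1) ^ (-g) * (1 - p.2) ^ (1 - -g)) ^ g * (1 - p.2) ^ g :=
        mul_le_mul_of_nonneg_right (Real.rpow_le_rpow_of_nonpos (by positivity) hmean hg0)
          (by positivity)
    _ = (1 - p.1) ^ (-g ^ 2) * (1 - p.2) ^ (g * (g + 2)) := by
        rw [Real.mul_rpow (by positivity) (by positivity), ← Real.rpow_mul hx.le,
          ← Real.rpow_mul hz.le, mul_assoc, ← Real.rpow_add hz]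
        ring_nf

lemma similarityDensity_powerKernel_le {α β γ g : ℝ} (hg : -1 ≤ g) (hg0 : g ≤ 0) (hgγ : g ≤ γ)
    (hαβγ : -(3 / 2) ≤ α + β + γ) {p : ℝ × ℝ} (hp : p ∈ unitSquare) :
    similarityDensity (powerKernel α β γ) (α + β + γ) p ≤
      p.1 ^ (2 * α + β + γ + 1) * (1 - p.1) ^ (-g ^ 2) *
        (p.2 ^ (2 * α) * (1 - p.2) ^ (g * (g + 2))) := by
  have hcorner := one_sub_mul_rpow_mul_one_sub_rpow_le hg hg0 hgγ hp
  rw [eqOn_similarityDensity_powerKernel _ _ _ hp]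
  obtain ⟨⟨hx0, hx1⟩, hz0, hz1⟩ := hp
  have _ : 0 < 1 - p.1 := sub_pos.2 hx1
  have _ : 0 < 1 - p.2 := sub_pos.2 hz1
  have hone : (1 + p.1) ^ (-(2 * α + 2 * β + 2 * γ + 3)) ≤ 1 :=
    Real.rpow_le_one_of_one_le_of_nonpos (by linarith) (by linarith)
  calc p.2 ^ (2 * α) * (1 - p.2 * p.1) ^ γ * p.1 ^ (2 * α + β + γ + 1) * (1 - p.2) ^ γ *
        (1 + p.1) ^ (-(2 * α + 2 * β + 2 * γ + 3))
      = p.1 ^ (2 * α + β + γ + 1) * p.2 ^ (2 * α) * ((1 - p.2 * p.1) ^ γ * (1 - p.2) ^ γ) *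
          (1 + p.1) ^ (-(2 * α + 2 * β + 2 * γ + 3)) := by ring
    _ ≤ p.1 ^ (2 * α + β + γ + 1) * p.2 ^ (2 * α) *
          ((1 - p.1) ^ (-g ^ 2) * (1 - p.2) ^ (g * (g + 2))) * 1 := by gcongr
    _ = _ := by ring

lemma integrableOn_similarityDensity_powerKernel {α β γ : ℝ} (hα : -(1 / 2) < α) (hγ : -1 < γ)
    (hαβγ : -(3 / 2) < α + β + γ) :
    IntegrableOn (similarityDensity (powerKernel α β γ) (α + β + γ)) unitSquare := by
  have hK := isHomogeneousKernel_powerKernel α β γ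
  set g := min γ 0
  have hg : -1 < g := lt_min hγ (by norm_num)
  have hg0 : g ≤ 0 := min_le_right _ _
  have hbound : IntegrableOn (fun p : ℝ × ℝ =>
      p.1 ^ (2 * α + β + γ + 1) * (1 - p.1) ^ (-g ^ 2) *
        (p.2 ^ (2 * α) * (1 - p.2) ^ (g * (g + 2)))) unitSquare := by
    rw [IntegrableOn, Measure.volume_eq_prod, ← Measure.prod_restrict]
    exact (integrableOn_rpow_mul_one_sub_rpow (by linarith) (by nlinarith)).mul_prod
      (integrableOn_rpow_mul_one_sub_rpow (by linarith) (by nlinarith))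
  have hmeas : Measurable (similarityDensity (powerKernel α β γ) (α + β + γ)) := by
    unfold similarityDensity powerKernel
    fun_prop
  refine hbound.mono' hmeas.aestronglyMeasurable ?_
  filter_upwards [ae_restrict_mem measurableSet_unitSquare] with p hp
  rw [Real.norm_of_nonneg (hK.similarityDensity_nonneg hp)]
  exact similarityDensity_powerKernel_le hg.le hg0 (min_le_left γ 0) hαβγ.le hp

lemma eqOn_sq_integral_exp_neg_mul_powerKernel (α β γ θ : ℝ) :
    EqOn (fun s => (∫ t in Ioi s, Real.exp (-(θ * t)) * powerKernel α β γ t s) ^ 2)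
      (fun s => s ^ (2 * α) * (∫ t in Ioi s, Real.exp (-(θ * t)) * t ^ β * (t - s) ^ γ) ^ 2)
      (Ioi 0) := by
  intro s (hs : 0 < s)
  have hpull : ∀ t, Real.exp (-(θ * t)) * powerKernel α β γ t s =
      s ^ α * (Real.exp (-(θ * t)) * t ^ β * (t - s) ^ γ) := fun t => by
    rw [powerKernel]
    ring
  simp only [hpull, integral_const_mul, mul_pow]
  rw [← Real.rpow_mul_natCast hs.le, Nat.cast_ofNat, mul_comm α 2]

end PowerKernel

/-- Remark 4.9: the formula for the second moment `E η_∞²`, where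
`η_∞ = ∫₀^∞ e^{-θs} X_s ds`, together with the finiteness of both sides. -/
theorem stmt_19 (α β γ θ : ℝ) (hα : -(1/2 : ℝ) < α) (hγ : -1 < γ)
    (hαβγ : -(3/2 : ℝ) < α + β + γ) (hθ : 0 < θ) :
    IntegrableOn (fun s : ℝ => s ^ (2*α) *
      (∫ t in Set.Ioi s, Real.exp (-(θ * t)) * t ^ β * (t - s) ^ γ) ^ 2)
      (Set.Ioi (0:ℝ)) ∧
    IntegrableOn (fun p : ℝ × ℝ => p.2 ^ (2*α) * (1 - p.2 * p.1) ^ γ *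
      p.1 ^ (2*α+β+γ+1) * (1 - p.2) ^ γ * (1 + p.1) ^ (-(2*α+2*β+2*γ+3)))
      (Set.Ioo (0:ℝ) 1 ×ˢ Set.Ioo (0:ℝ) 1) ∧
    (1 / θ ^ (2 : ℕ)) * (∫ s in Set.Ioi (0:ℝ), s ^ (2*α) *
      (∫ t in Set.Ioi s, Real.exp (-(θ * t)) * t ^ β * (t - s) ^ γ) ^ 2)
    = (2 * Real.Gamma (2*α+2*β+2*γ+3) / θ ^ (2*α+2*β+2*γ+5)) *
      ∫ x in Set.Ioo (0:ℝ) 1, ∫ z in Set.Ioo (0:ℝ) 1,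
        z ^ (2*α) * (1 - z * x) ^ γ * x ^ (2*α+β+γ+1) * (1 - z) ^ γ *
          (1 + x) ^ (-(2*α+2*β+2*γ+3)) := by
  have hK := isHomogeneousKernel_powerKernel α β γ
  have hint := integrableOn_similarityDensity_powerKernel hα hγ hαβγ
  have hdensity := eqOn_similarityDensity_powerKernel α β γ
  have hsq := eqOn_sq_integral_exp_neg_mul_powerKernel α β γ θ
  have hint' := hint.congr_fun hdensity measurableSet_unitSquare
  have hθpow : θ ^ (2*α+2*β+2*γ+5) = θ ^ (2*α+2*β+2*γ+3) * θ ^ 2 := by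
    rw [← Real.rpow_natCast θ 2, ← Real.rpow_add hθ]
    push_cast
    ring_nf
  refine ⟨(hK.integrableOn_sq_integral_exp_neg_mul hαβγ hθ hint).congr_fun hsq measurableSet_Ioi,
    hint', ?_⟩
  rw [← setIntegral_congr_fun measurableSet_Ioi hsq,
    hK.integral_sq_integral_exp_neg_mul hαβγ hθ hint,
    setIntegral_congr_fun measurableSet_unitSquare hdensity, Measure.volume_eq_prod,
    setIntegral_prod _ hint', hθpow, show 2 * (α + β + γ) + 3 = 2*α+2*β+2*γ+3 by ring]
  field_simp
end
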